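/- Let n ≥ 3 and R > 0, and write Ω_R = {x ∈ ℝⁿ : |x| ≥ R}. Let A = (a_ij) : ℝⁿ → ℝ^{n×n} be a symmetric-matrix-valued map which is locally Lipschitz and uniformly elliptic, i.e. there exist 0 < λ ≤ Λ with λ|ξ|² ≤ ∑_{i,j=1}^n a_ij(p) ξ_i ξ_j ≤ Λ|ξ|² for all p, ξ ∈ ℝⁿ. Suppose φ ∈ C²(Ω_R) satisfies ∑_{i,j=1}^n a_ij(∇φ(x)) ∂_{x_i}∂_{x_j}φ(x) = 0 in Ω_R, and that there exist a constant vector u^∞ ∈ ℝⁿ and constants C > 0, σ > 0 such that |∇φ(x) − u^∞| ≤ C|x|^{−1−σ} for all x ∈ Ω_R. Then there exist R' ≥ R and a constant C₀ > 0 such that |∇φ(x) − u^∞| ≤ C₀ |x|^{−n+1} for all x ∈ Ω_{R'}. -/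

import Mathlib

/-!
The theorem is proved by elementary maximum-principle arguments applied to
`w = φ - ⟨u∞, ·⟩ - c`, which has the same second derivatives as `φ` and satisfies
`tr(b(x) D²w) = 0` with `b(x) = a(∇φ(x))`, `∇w = ∇φ - u∞`.

*Limit at infinity* (`exists_limit`). Since `|∇w| ≤ C |x|^(-1-σ)` is integrable along rays and
its supremum times the radius tends to `0` on large spheres, `φ - ⟨u∞, x⟩` converges at infinity;
`c` is its limit, so `w → 0`.

*Decay of `w`* (`comparison`). Let `A = a(u∞)`, `B = A⁻¹`, `q(x) = ⟨x, Bx⟩`. The function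
`q^((2-n)/2)` is a solution for the constant matrix `A`. Subtracting `q^((1-n)/2)` gives
`tr(A D²) = -(n-1) q^(-(n+1)/2)`, which absorbs the error coming from
`|b(x) - A| ≤ K |x|^(-1-σ)` (`barrier_neg`). The maximum principle in the
exterior of a large ball then gives `|w| ≤ N |x|^(2-n)`.

*Gradient estimate* (`grad_core`, `grad_est`). An interior bound `|∇w(x₀)| ≤ M sup |w| / r` holds
on balls of radius `r`, with `M` depending on the ellipticity and the dimension only. It is
obtained by doubling of variables: `w(x) - w(y)` is compared with a concave modulus of
`|x - y|` plus a quadratic localisation. At a maximum, the gradients `∇w(x)` and `∇w(y)` differ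
only by the gradient of the localisation, so the Lipschitz bound on `a` makes `b(x) - b(y)` small
exactly where it is needed, and no modulus of continuity of `b` in `x` enters. The smallness
condition it requires holds on the balls `B(x₀, |x₀|/2)` as soon as `|x₀|` is large, because
`sup |w| · sup |∇w| ≤ const`.
Applied with `r = |x₀|/2` it gives `|∇w(x₀)| ≤ const · |x₀|^(2-n) / |x₀|` (`grad_decay`).
-/

open scoped BigOperators RealInnerProductSpace

/-- Second partial derivative `∂_{x_i} ∂_{x_j} f` on Euclidean space. -/
noncomputable def pdd {n : ℕ} (f : EuclideanSpace ℝ (Fin n) → ℝ) (i j : Fin n)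
    (x : EuclideanSpace ℝ (Fin n)) : ℝ :=
  fderiv ℝ (fun y => gradient f y j) x (EuclideanSpace.single i 1)

section

open Filter Topology

/-! ### Traces against positive semidefinite forms -/

/-- The quadratic form `∑ Mᵢⱼ vᵢ vⱼ` of a square array. -/
def qf {n : ℕ} (M : Fin n → Fin n → ℝ) (v : Fin n → ℝ) : ℝ := ∑ i, ∑ j, M i j * v i * v j

/-- The trace pairing `tr(M Zᵀ) = ∑ Mᵢⱼ Zᵢⱼ`. -/
def tp {n : ℕ} (M Z : Fin n → Fin n → ℝ) : ℝ := ∑ i, ∑ j, M i j * Z i j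

/-- If `M ≥ c I` as a form and `Z ≥ 0`, then `tr(MZ) ≥ c tr Z`; the constant `c` may be negative.
This single inequality carries all the linear algebra below. -/
lemma tp_ge {n : ℕ} (M Z : Fin n → Fin n → ℝ) (c : ℝ)
    (hZs : ∀ i j, Z i j = Z j i) (hZ : ∀ v, 0 ≤ qf Z v)
    (hM : ∀ v, c * ∑ i, v i ^ 2 ≤ qf M v) : c * ∑ i, Z i i ≤ tp M Z := by
  have hps : (Matrix.of Z).PosSemidef := by
    refine Matrix.PosSemidef.of_dotProduct_mulVec_nonneg ?_ ?_
    · ext i j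
      simp [Matrix.conjTranspose_apply, hZs j i]
    · intro v
      have := hZ v
      simp only [qf] at this
      simp only [dotProduct, Matrix.mulVec, Finset.mul_sum]
      refine this.trans_eq ?_
      refine Finset.sum_congr rfl fun i _ => Finset.sum_congr rfl fun j _ => ?_
      simp
      ring
  obtain ⟨m, B, hB⟩ := Matrix.posSemidef_iff_eq_sum_vecMulVec.1 hps
  have hZB : ∀ i j, Z i j = ∑ k, B k i * B k j := by
    intro i j
    have := congrFun (congrFun hB i) j
    simpa [Matrix.sum_apply, Matrix.vecMulVec_apply] using this
  have h1 : ∑ i, Z i i = ∑ k, ∑ i, B k i ^ 2 := by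
    rw [Finset.sum_comm]
    refine Finset.sum_congr rfl fun i _ => ?_
    rw [hZB]
    exact Finset.sum_congr rfl fun k _ => by ring
  have h2 : tp M Z = ∑ k, qf M (B k) := by
    simp only [tp, qf, hZB, Finset.mul_sum]
    rw [Finset.sum_comm' (t' := Finset.univ) (s' := fun _ => Finset.univ) (by simp)]
    conv_rhs => rw [Finset.sum_comm]
    rw [Finset.sum_comm]
    refine Finset.sum_congr rfl fun i _ => ?_
    rw [Finset.sum_comm]
    refine Finset.sum_congr rfl fun k _ => Finset.sum_congr rfl fun j _ => ?_
    ring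
  rw [h1, h2, Finset.mul_sum]
  exact Finset.sum_le_sum fun k _ => hM (B k)

lemma tp_add_right {n : ℕ} (M Z W : Fin n → Fin n → ℝ) (c d : ℝ) :
    tp M (fun i j => c * Z i j + d * W i j) = c * tp M Z + d * tp M W := by
  simp only [tp, Finset.mul_sum, ← Finset.sum_add_distrib]
  exact Finset.sum_congr rfl fun i _ => Finset.sum_congr rfl fun j _ => by ring

lemma tp_add_left {n : ℕ} (M Z W : Fin n → Fin n → ℝ) (c d : ℝ) :
    tp (fun i j => c * Z i j + d * W i j) M = c * tp Z M + d * tp W M := by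
  simp only [tp, Finset.mul_sum, ← Finset.sum_add_distrib]
  exact Finset.sum_congr rfl fun i _ => Finset.sum_congr rfl fun j _ => by ring

lemma qf_add {n : ℕ} (Z W : Fin n → Fin n → ℝ) (c d : ℝ) (v : Fin n → ℝ) :
    qf (fun i j => c * Z i j + d * W i j) v = c * qf Z v + d * qf W v := by
  simp only [qf, Finset.mul_sum, ← Finset.sum_add_distrib]
  exact Finset.sum_congr rfl fun i _ => Finset.sum_congr rfl fun j _ => by ring

/-- The identity array. -/
def idm {n : ℕ} (i j : Fin n) : ℝ := if i = j then 1 else 0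

lemma qf_idm {n : ℕ} (v : Fin n → ℝ) : qf idm v = ∑ i, v i ^ 2 := by
  simp [qf, idm, pow_two]

lemma tp_idm_right {n : ℕ} (M : Fin n → Fin n → ℝ) : tp M idm = ∑ i, M i i := by
  simp [tp, idm]

lemma idm_comm {n : ℕ} (i j : Fin n) : (idm i j : ℝ) = idm j i := by
  simp [idm, eq_comm]

lemma qf_le_of_entries {n : ℕ} (M : Fin n → Fin n → ℝ) (ε : ℝ) (hM : ∀ i j, |M i j| ≤ ε)
    (v : Fin n → ℝ) : |qf M v| ≤ ε * n * ∑ i, v i ^ 2 := by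
  have h1 : |qf M v| ≤ ∑ i, ∑ j, ε * ((v i ^ 2 + v j ^ 2) / 2) := by
    refine (Finset.abs_sum_le_sum_abs _ _).trans (Finset.sum_le_sum fun i _ => ?_)
    refine (Finset.abs_sum_le_sum_abs _ _).trans (Finset.sum_le_sum fun j _ => ?_)
    have h0 : 0 ≤ ε := (abs_nonneg _).trans (hM i j)
    rw [mul_assoc, abs_mul]
    refine mul_le_mul (hM i j) ?_ (abs_nonneg _) h0
    rw [abs_le]
    constructor <;> nlinarith [sq_nonneg (v i + v j), sq_nonneg (v i - v j)]
  refine h1.trans_eq ?_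
  simp only [← Finset.mul_sum, ← Finset.sum_div, Finset.sum_add_distrib, Finset.sum_const,
    Finset.card_univ, Fintype.card_fin, nsmul_eq_mul]
  ring

lemma tp_le_of_entries {n : ℕ} (M Z : Fin n → Fin n → ℝ) (ε : ℝ) (hM : ∀ i j, |M i j| ≤ ε)
    (hZs : ∀ i j, Z i j = Z j i) (hZ : ∀ v, 0 ≤ qf Z v) :
    |tp M Z| ≤ ε * n * ∑ i, Z i i := by
  rw [abs_le]
  constructor
  · have := tp_ge M Z (-(ε * n)) hZs hZ (fun v => by
      have := (abs_le.1 (qf_le_of_entries M ε hM v)).1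
      linarith)
    linarith
  · have := tp_ge (fun i j => (-1) * M i j + 0 * M i j) Z (-(ε * n)) hZs hZ (fun v => by
      rw [qf_add]
      have := (abs_le.1 (qf_le_of_entries M ε hM v)).2
      linarith)
    rw [tp_add_left] at this
    linarith

lemma tr_le_of_ell {n : ℕ} (M : Fin n → Fin n → ℝ) (c : ℝ)
    (hM : ∀ v, qf M v ≤ c * ∑ i, v i ^ 2) : ∑ i, M i i ≤ n * c := by
  have := tp_ge (fun i j => (-1) * M i j + 0 * M i j) idm (-c) idm_comm
    (fun v => by rw [qf_idm]; positivity) (fun v => by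
      rw [qf_add]
      have := hM v
      linarith)
  rw [tp_add_left, tp_idm_right] at this
  simp [idm] at this
  linarith

/-- A positive semidefinite form at a unit vector is at most its trace. -/
lemma qf_le_tr {n : ℕ} (Z : Fin n → Fin n → ℝ) (hZs : ∀ i j, Z i j = Z j i)
    (hZ : ∀ v, 0 ≤ qf Z v) (e : Fin n → ℝ) (he : ∑ i, e i ^ 2 = 1) :
    qf Z e ≤ ∑ i, Z i i := by
  have := tp_ge (fun i j => -(e i * e j)) Z (-1) hZs hZ (fun v => by
    have h1 : qf (fun i j => -(e i * e j)) v = -(∑ i, e i * v i) ^ 2 := by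
      rw [pow_two, Finset.sum_mul_sum, ← Finset.sum_neg_distrib]
      refine Finset.sum_congr rfl fun i _ => ?_
      rw [← Finset.sum_neg_distrib]
      exact Finset.sum_congr rfl fun j _ => by ring
    have h2 := Finset.sum_mul_sq_le_sq_mul_sq Finset.univ e v
    rw [he] at h2
    rw [h1]
    linarith)
  have h3 : tp (fun i j => -(e i * e j)) Z = - qf Z e := by
    simp only [tp, qf, ← Finset.sum_neg_distrib]
    exact Finset.sum_congr rfl fun i _ => Finset.sum_congr rfl fun j _ => by ring
  rw [h3] at this
  linarith

/-- The algebraic heart of the doubling argument. `H`, `K` are the Hessians at the two points of a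
maximum and `b`, `b'` the coefficient matrices there. The form `2μI - (H - K)` is nonnegative and
large in the direction `e`, so `tr(bH) = 0 = tr(b'K)` bounds the gap `g` by the penalization `μ`
and by the oscillation `ε` of the coefficients times the size `k` of `K`. -/
lemma doubling_algebra {n : ℕ} (b b' H K : Fin n → Fin n → ℝ) (lam Lam ε k μ g : ℝ)
    (hlam : 0 < lam) (hLam : lam ≤ Lam) (hk : 0 ≤ k) (hμ : 0 ≤ μ) (hε : 0 ≤ ε)
    (hb : ∀ v, lam * ∑ i, v i ^ 2 ≤ qf b v) (hb2 : ∀ v, qf b v ≤ Lam * ∑ i, v i ^ 2)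
    (hb' : ∀ v, lam * ∑ i, v i ^ 2 ≤ qf b' v) (hb'2 : ∀ v, qf b' v ≤ Lam * ∑ i, v i ^ 2)
    (hbb : ∀ i j, |b i j - b' i j| ≤ ε)
    (hHs : ∀ i j, H i j = H j i) (hKs : ∀ i j, K i j = K j i)
    (hH : tp b H = 0) (hK : tp b' K = 0)
    (h1 : ∀ v, qf H v - qf K v ≤ 2 * μ * ∑ i, v i ^ 2)
    (h2 : ∀ v, - qf K v ≤ k * ∑ i, v i ^ 2)
    (e : Fin n → ℝ) (he : ∑ i, e i ^ 2 = 1) (h3 : qf H e - qf K e ≤ 2 * μ - g) :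
    lam * g ≤ 2 * μ * n * Lam + 2 * ε * k * n ^ 2 * Lam / lam := by
  have hn0 : (0 : ℝ) ≤ n := Nat.cast_nonneg n
  -- the nonnegative form `2μI - (H - K)`
  set Z : Fin n → Fin n → ℝ := fun i j => 1 * (2 * μ * idm i j + (-1) * H i j) + 1 * K i j with hZ
  have qZ : ∀ v, qf Z v = 2 * μ * ∑ i, v i ^ 2 - (qf H v - qf K v) := by
    intro v
    rw [hZ, qf_add (fun i j => 2 * μ * idm i j + (-1) * H i j) K, qf_add, qf_idm]
    ring
  have Zs : ∀ i j, Z i j = Z j i := by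
    intro i j
    simp only [hZ]
    rw [idm_comm i j, hHs i j, hKs i j]
  have Zp : ∀ v, 0 ≤ qf Z v := fun v => by rw [qZ]; linarith [h1 v]
  have tZ : tp b Z = 2 * μ * ∑ i, b i i + tp b K := by
    rw [hZ, tp_add_right b (fun i j => 2 * μ * idm i j + (-1) * H i j) K, tp_add_right,
      tp_idm_right, hH]
    ring
  have l1 := tp_ge b Z lam Zs Zp hb
  have l2 := qf_le_tr Z Zs Zp e he
  have l3 : g ≤ qf Z e := by rw [qZ, he]; linarith
  have l4 : lam * g ≤ 2 * μ * ∑ i, b i i + tp b K := by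
    rw [← tZ]
    exact le_trans (mul_le_mul_of_nonneg_left (l3.trans l2) hlam.le) l1
  have l5' := tr_le_of_ell b' Lam hb'2
  have l5 := tr_le_of_ell b Lam hb2
  -- the nonnegative form `K + kI`
  set W : Fin n → Fin n → ℝ := fun i j => 1 * K i j + k * idm i j with hW
  have qW : ∀ v, qf W v = qf K v + k * ∑ i, v i ^ 2 := by
    intro v
    rw [hW, qf_add, qf_idm]
    ring
  have Ws : ∀ i j, W i j = W j i := by
    intro i j
    simp only [hW]
    rw [idm_comm i j, hKs i j]
  have Wp : ∀ v, 0 ≤ qf W v := fun v => by rw [qW]; linarith [h2 v]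
  have m1 := tp_ge b' W lam Ws Wp hb'
  have m2 : tp b' W = k * ∑ i, b' i i := by
    rw [hW, tp_add_right, hK, tp_idm_right]
    ring
  have m3 : ∑ i, W i i ≤ k * n * Lam / lam := by
    rw [le_div_iff₀ hlam]
    nlinarith [mul_le_mul_of_nonneg_left l5' hk]
  set D : Fin n → Fin n → ℝ := fun i j => 1 * b i j + (-1) * b' i j with hD
  have hDe : ∀ i j, |D i j| ≤ ε := by
    intro i j
    have : D i j = b i j - b' i j := by simp only [hD]; ring
    rw [this]
    exact hbb i j
  have m4 := (abs_le.1 (tp_le_of_entries D W ε hDe Ws Wp)).2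
  have m5 := (abs_le.1 (tp_le_of_entries D idm ε hDe idm_comm
    (fun v => by rw [qf_idm]; positivity))).1
  have m6 : tp D W = tp D K + k * tp D idm := by
    rw [hW, tp_add_right]
    ring
  have m7 : tp D K = tp b K := by
    rw [hD, tp_add_left, hK]
    ring
  have m8 : ∑ i : Fin n, (idm i i : ℝ) = n := by simp [idm]
  rw [m8] at m5
  have m9 : tp b K ≤ ε * n * (k * n * Lam / lam) + k * (ε * n * n) := by
    have q1 := mul_le_mul_of_nonneg_left m3 (mul_nonneg hε hn0)
    have q2 := mul_le_mul_of_nonneg_left m5 hk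
    linarith
  have m10 : k * (ε * n * n) ≤ ε * n * (k * n * Lam / lam) := by
    have : ε * n * (k * n * Lam / lam) = k * (ε * n * n) * (Lam / lam) := by ring
    rw [this]
    exact le_mul_of_one_le_right (by positivity) ((one_le_div hlam).2 hLam)
  have m11 : ε * n * (k * n * Lam / lam) = ε * k * n ^ 2 * Lam / lam := by ring
  have m12 := mul_le_mul_of_nonneg_left l5 (by positivity : 0 ≤ 2 * μ)
  have m13 : 2 * ε * k * n ^ 2 * Lam / lam = 2 * (ε * k * n ^ 2 * Lam / lam) := by ring
  rw [m13]
  linarith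

/-! ### Second-order differentiability along lines -/

/-- `g` is differentiable near `0`, with `g'(0) = p`, and `g'` is differentiable at `0` with
`g''(0) = c`. -/
def HD2 (g : ℝ → ℝ) (p c : ℝ) : Prop :=
  ∃ g' : ℝ → ℝ, (∀ᶠ t in 𝓝 (0 : ℝ), HasDerivAt g (g' t) t) ∧ g' 0 = p ∧ HasDerivAt g' c 0

lemma HD2.add {f g : ℝ → ℝ} {p q c d : ℝ} (hf : HD2 f p c) (hg : HD2 g q d) :
    HD2 (fun t => f t + g t) (p + q) (c + d) := by
  obtain ⟨f', h1, h2, h3⟩ := hf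
  obtain ⟨g', k1, k2, k3⟩ := hg
  refine ⟨fun t => f' t + g' t, ?_, by simp [h2, k2], h3.add k3⟩
  filter_upwards [h1, k1] with t a b using a.add b

lemma HD2.const_mul {f : ℝ → ℝ} {p c : ℝ} (m : ℝ) (hf : HD2 f p c) :
    HD2 (fun t => m * f t) (m * p) (m * c) := by
  obtain ⟨f', h1, h2, h3⟩ := hf
  refine ⟨fun t => m * f' t, ?_, by simp [h2], h3.const_mul m⟩
  filter_upwards [h1] with t a using a.const_mul m

lemma HD2.sub {f g : ℝ → ℝ} {p q c d : ℝ} (hf : HD2 f p c) (hg : HD2 g q d) :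
    HD2 (fun t => f t - g t) (p - q) (c - d) := by
  obtain ⟨f', h1, h2, h3⟩ := hf
  obtain ⟨g', k1, k2, k3⟩ := hg
  refine ⟨fun t => f' t - g' t, ?_, by simp [h2, k2], h3.sub k3⟩
  filter_upwards [h1, k1] with t a b using a.sub b

lemma hasDerivAt_quad (α β γ t : ℝ) :
    HasDerivAt (fun t => α + β * t + γ * t ^ 2) (β + 2 * γ * t) t := by
  have h := (((hasDerivAt_id t).const_mul β).const_add α).add
    (((hasDerivAt_id t).pow 2).const_mul γ)
  refine (h.congr_deriv ?_).congr_of_eventuallyEq ?_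
  · simp
    ring
  · exact Eventually.of_forall fun s => by simp

lemma HD2.quad (α β γ : ℝ) : HD2 (fun t => α + β * t + γ * t ^ 2) β (2 * γ) := by
  refine ⟨fun t => β + 2 * γ * t, Eventually.of_forall fun t => hasDerivAt_quad α β γ t,
    by simp, ?_⟩
  simpa using ((hasDerivAt_id (0 : ℝ)).const_mul (2 * γ)).const_add β

/-- Chain rule for a real power of a quadratic polynomial that is positive at `0`. -/
lemma HD2.rpow_quad (α β γ a : ℝ) (hα : 0 < α) :
    HD2 (fun t => (α + β * t + γ * t ^ 2) ^ a) (a * α ^ (a - 1) * β)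
      (a * (a - 1) * α ^ (a - 2) * β ^ 2 + a * α ^ (a - 1) * (2 * γ)) := by
  refine ⟨fun t => (β + 2 * γ * t) * a * (α + β * t + γ * t ^ 2) ^ (a - 1), ?_, ?_, ?_⟩
  · have hc : ContinuousAt (fun t : ℝ => α + β * t + γ * t ^ 2) 0 := by fun_prop
    have : ∀ᶠ t in 𝓝 (0 : ℝ), 0 < α + β * t + γ * t ^ 2 :=
      hc.eventually (lt_mem_nhds (by simpa using hα))
    filter_upwards [this] with t ht
    exact (hasDerivAt_quad α β γ t).rpow_const (Or.inl ht.ne')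
  · simp
    ring
  · have h1 : HasDerivAt (fun t : ℝ => β + 2 * γ * t) (2 * γ) 0 := by
      simpa using ((hasDerivAt_id (0 : ℝ)).const_mul (2 * γ)).const_add β
    have h2 := (hasDerivAt_quad α β γ 0).rpow_const (p := a - 1) (Or.inl (by simpa using hα.ne'))
    have h3 := (h1.mul_const a).mul h2
    refine h3.congr_deriv ?_
    simp only [mul_zero, add_zero, ne_eq, OfNat.ofNat_ne_zero, not_false_eq_true, zero_pow]
    rw [show a - 1 - 1 = a - 2 by ring]
    ring

/-- The necessary conditions at an interior maximum. -/
lemma HD2.of_isLocalMax {g : ℝ → ℝ} {p c : ℝ} (h : HD2 g p c) (hm : IsLocalMax g 0) :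
    p = 0 ∧ c ≤ 0 := by
  obtain ⟨g', h1, h2, h3⟩ := h
  have hp : p = 0 := by
    rw [← h2]
    exact hm.hasDerivAt_eq_zero h1.self_of_nhds
  refine ⟨hp, ?_⟩
  by_contra! hc
  have e1 : deriv g =ᶠ[𝓝 0] g' := by
    filter_upwards [h1] with t ht using ht.deriv
  have e2 : deriv (deriv g) 0 = c := by
    rw [e1.deriv_eq, h3.deriv]
  have hmin : IsLocalMin g 0 := isLocalMin_of_deriv_deriv_pos (by rw [e2]; exact hc)
    (by rw [e1.self_of_nhds, h2, hp]) h1.self_of_nhds.continuousAt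
  -- a maximum that is also a strict-type minimum forces `g` to be locally constant
  have e3 : g =ᶠ[𝓝 0] fun _ => g 0 := by
    filter_upwards [hm, hmin] with t a b using le_antisymm a b
  have e4 : deriv g =ᶠ[𝓝 0] fun _ => 0 := by
    have := e3.deriv
    simpa using this
  have e5 : deriv (deriv g) 0 = 0 := by rw [e4.deriv_eq]; simp
  linarith

/-- The array of second derivatives `∂ᵢ∂ⱼ w (x)`. -/
noncomputable def hess {n : ℕ} (w : EuclideanSpace ℝ (Fin n) → ℝ) (x : EuclideanSpace ℝ (Fin n))
    (i j : Fin n) : ℝ :=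
  fderiv ℝ (fderiv ℝ w) x (EuclideanSpace.single i 1) (EuclideanSpace.single j 1)

lemma sum_single_smul {n : ℕ} (ξ : EuclideanSpace ℝ (Fin n)) :
    ∑ i, ξ i • EuclideanSpace.single i (1 : ℝ) = ξ := by
  ext j
  simp [Pi.single_apply]

lemma qf_hess {n : ℕ} (w : EuclideanSpace ℝ (Fin n) → ℝ) (x ξ : EuclideanSpace ℝ (Fin n)) :
    fderiv ℝ (fderiv ℝ w) x ξ ξ = qf (hess w x) ξ := by
  conv_lhs => rw [← sum_single_smul ξ]
  simp only [map_sum, map_smul, sum_apply, smul_apply,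
    smul_eq_mul, qf, hess, Finset.mul_sum]
  rw [Finset.sum_comm]
  exact Finset.sum_congr rfl fun i _ => Finset.sum_congr rfl fun j _ => by ring

lemma hess_symm {n : ℕ} {w : EuclideanSpace ℝ (Fin n) → ℝ} {x : EuclideanSpace ℝ (Fin n)}
    (hw : ContDiffAt ℝ 2 w x) (i j : Fin n) : hess w x i j = hess w x j i := by
  have := hw.isSymmSndFDerivAt (by simp)
  exact this.eq _ _

lemma HD2.line {n : ℕ} {w : EuclideanSpace ℝ (Fin n) → ℝ} {x : EuclideanSpace ℝ (Fin n)}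
    (hw : ContDiffAt ℝ 2 w x) (ξ : EuclideanSpace ℝ (Fin n)) :
    HD2 (fun t => w (x + t • ξ)) (fderiv ℝ w x ξ) (qf (hess w x) ξ) := by
  have hl : ∀ t : ℝ, HasDerivAt (fun t : ℝ => x + t • ξ) ξ t := fun t => by
    simpa using ((hasDerivAt_id t).smul_const ξ).const_add x
  refine ⟨fun t => fderiv ℝ w (x + t • ξ) ξ, ?_, by simp, ?_⟩
  · have h1 : ∀ᶠ y in 𝓝 x, ContDiffAt ℝ 2 w y := hw.eventually (by simp)
    have hc : Tendsto (fun t : ℝ => x + t • ξ) (𝓝 0) (𝓝 x) := by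
      have : ContinuousAt (fun t : ℝ => x + t • ξ) 0 := by fun_prop
      simpa [ContinuousAt] using this
    filter_upwards [hc.eventually h1] with t ht
    exact (ht.differentiableAt (by norm_num)).hasFDerivAt.comp_hasDerivAt t (hl t)
  · have h2 : DifferentiableAt ℝ (fderiv ℝ w) x :=
      (hw.fderiv_right (m := 1) (by norm_num)).differentiableAt (by norm_num)
    have h2' : HasFDerivAt (fderiv ℝ w) (fderiv ℝ (fderiv ℝ w) x) (x + (0 : ℝ) • ξ) := by
      simpa using h2.hasFDerivAt
    have h3 := h2'.comp_hasDerivAt (0 : ℝ) (hl 0)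
    have h4 := h3.clm_apply (hasDerivAt_const (0 : ℝ) ξ)
    rw [← qf_hess]
    simpa using h4

lemma norm_sq_eq_sum {n : ℕ} (ξ : EuclideanSpace ℝ (Fin n)) : ‖ξ‖ ^ 2 = ∑ i, ξ i ^ 2 :=
  EuclideanSpace.real_norm_sq_eq ξ

/-! ### Interior gradient estimate by doubling of variables -/

/-- The concave modulus `s - c s^(3/2)`, written as a function of `q = s²`. -/
noncomputable def modF (c q : ℝ) : ℝ := q ^ (1 / 2 : ℝ) - c * q ^ (3 / 4 : ℝ)

lemma sq_rpow {s : ℝ} (hs : 0 ≤ s) (a : ℝ) : (s ^ 2) ^ a = s ^ (2 * a) := by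
  rw [← Real.rpow_natCast s 2, ← Real.rpow_mul hs]
  norm_num

lemma modF_sq (c : ℝ) {s : ℝ} (hs : 0 ≤ s) : modF c (s ^ 2) = s - c * (s * √s) := by
  rw [modF, sq_rpow hs, sq_rpow hs]
  rcases hs.eq_or_lt with rfl | hs'
  · norm_num
  · rw [show (2 * (3 / 4) : ℝ) = 1 + 1 / 2 by norm_num, Real.rpow_add hs', Real.sqrt_eq_rpow]
    norm_num

lemma HD2.modF {c s β γ : ℝ} (hs : 0 < s) :
    HD2 (fun t => modF c (s ^ 2 + β * t + γ * t ^ 2))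
      ((1 / 2 / s - c * (3 / 4) / √s) * β)
      ((-(1 / 4) / s ^ 3 + c * (3 / 16) / (s ^ 2 * √s)) * β ^ 2
        + (1 / s - c * (3 / 2) / √s) * γ) := by
  have hs2 : 0 < s ^ 2 := by positivity
  have h := (HD2.rpow_quad (s ^ 2) β γ (1 / 2) hs2).sub
    ((HD2.rpow_quad (s ^ 2) β γ (3 / 4) hs2).const_mul c)
  have e1 : (s ^ 2) ^ (1 / 2 - 1 : ℝ) = 1 / s := by
    rw [sq_rpow hs.le, show (2 * (1 / 2 - 1) : ℝ) = -1 by norm_num, Real.rpow_neg_one]; simp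
  have e2 : (s ^ 2) ^ (1 / 2 - 2 : ℝ) = 1 / s ^ 3 := by
    rw [sq_rpow hs.le, show (2 * (1 / 2 - 2) : ℝ) = -(3 : ℕ) by norm_num, Real.rpow_neg hs.le,
      Real.rpow_natCast]; simp
  have e3 : (s ^ 2) ^ (3 / 4 - 1 : ℝ) = 1 / √s := by
    rw [sq_rpow hs.le, show (2 * (3 / 4 - 1) : ℝ) = -(1 / 2) by norm_num, Real.rpow_neg hs.le,
      Real.sqrt_eq_rpow]; simp
  have e4 : (s ^ 2) ^ (3 / 4 - 2 : ℝ) = 1 / (s ^ 2 * √s) := by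
    rw [sq_rpow hs.le, show (2 * (3 / 4 - 2) : ℝ) = -((2 : ℕ) + 1 / 2) by norm_num,
      Real.rpow_neg hs.le, Real.rpow_add hs, Real.rpow_natCast, Real.sqrt_eq_rpow]; simp
  rw [e1, e2, e3, e4] at h
  unfold _root_.modF
  convert h using 1 <;> ring

set_option maxHeartbeats 800000 in
/-- One-sided Lipschitz estimate at the centre of a ball for solutions of `tr(b D²w) = 0` whose
coefficients are Lipschitz functions of `∇w`.

The function `w x - w y - m (s - c s^(3/2)) - m' |x - x₀|²`, `s = |x - y|`, is shown to have no
positive maximum. At such a maximum the first-order conditions give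
`∇w(x) - ∇w(y) = 2m'(x - x₀)`, so the coefficients at `x` and `y` differ by `O(√s)` even though no
modulus of continuity of `∇w` is available. The concavity `-s^(-1/2)` of the modulus absorbs the
resulting error. -/
lemma grad_core {n : ℕ} (hn : 0 < n) (w : EuclideanSpace ℝ (Fin n) → ℝ)
    (b : EuclideanSpace ℝ (Fin n) → Fin n → Fin n → ℝ) (x0 : EuclideanSpace ℝ (Fin n))
    (r N G L lam Lam : ℝ) (hr : 0 < r) (hN : 0 < N) (hL : 0 ≤ L)
    (hlam : 0 < lam) (hLam : lam ≤ Lam)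
    (hw : ∀ x ∈ Metric.closedBall x0 r, ContDiffAt ℝ 2 w x)
    (hb1 : ∀ x v, lam * ∑ i, v i ^ 2 ≤ qf (b x) v)
    (hb2 : ∀ x v, qf (b x) v ≤ Lam * ∑ i, v i ^ 2)
    (heq : ∀ x ∈ Metric.closedBall x0 r, tp (b x) (hess w x) = 0)
    (hwN : ∀ x ∈ Metric.closedBall x0 r, |w x| ≤ N)
    (hwG : ∀ x ∈ Metric.closedBall x0 r, ‖fderiv ℝ w x‖ ≤ G)
    (hLip : ∀ x ∈ Metric.closedBall x0 r, ∀ y ∈ Metric.closedBall x0 r, ∀ i j,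
      |b x i j - b y i j| ≤ L * ‖fderiv ℝ w x - fderiv ℝ w y‖)
    (hsmall : 32 * L ^ 2 * N * G ≤ (lam ^ 2 / (2 * n ^ 2 * Lam)) ^ 2 * r) :
    ∀ y, ‖x0 - y‖ ≤ r / 4 → w x0 - w y ≤ (8 * n * Lam / lam + 17) * N / r * ‖x0 - y‖ := by
  have hLam0 : 0 < Lam := hlam.trans_le hLam
  have hn' : (0 : ℝ) < n := Nat.cast_pos.2 hn
  set M : ℝ := 8 * n * Lam / lam + 17 with hM
  have hM17 : 17 ≤ M := by
    have : 0 ≤ 8 * n * Lam / lam := by positivity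
    linarith
  have hM0 : 0 < M := by linarith
  set m : ℝ := M * N / r with hm
  have hm0 : 0 < m := by positivity
  set m' : ℝ := 8 * N / r ^ 2 with hm'
  have hm'0 : 0 < m' := by positivity
  set c : ℝ := 2 / (3 * √r) with hc
  have hsr : 0 < √r := Real.sqrt_pos.2 hr
  have hc0 : 0 < c := by positivity
  set Φ : EuclideanSpace ℝ (Fin n) × EuclideanSpace ℝ (Fin n) → ℝ := fun p =>
    w p.1 - w p.2 - m * modF c (‖p.1 - p.2‖ ^ 2) - m' * ‖p.1 - x0‖ ^ 2 with hΦ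
  -- on the relevant range `s ≤ r / 4` the correction `c √s` is at most `1/3`
  have hcs : ∀ s : ℝ, s ≤ r / 4 → c * √s ≤ 1 / 3 := by
    intro s h1
    have : √s ≤ √r / 2 := by
      rw [Real.sqrt_le_left (by positivity), div_pow, Real.sq_sqrt hr.le]
      linarith
    calc c * √s ≤ c * (√r / 2) := by gcongr
      _ = 1 / 3 := by rw [hc]; field_simp
  have hF : ∀ s : ℝ, 0 ≤ s → s ≤ r / 4 → 2 / 3 * s ≤ modF c (s ^ 2) ∧ modF c (s ^ 2) ≤ s := by
    intro s h0 h1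
    rw [modF_sq c h0]
    have h2 := mul_le_mul_of_nonneg_left (hcs s h1) h0
    have h3 : 0 ≤ s * (c * √s) := by positivity
    constructor <;> linarith
  set D : Set (EuclideanSpace ℝ (Fin n) × EuclideanSpace ℝ (Fin n)) :=
    {p | ‖p.1 - x0‖ ≤ r / 2 ∧ ‖p.1 - p.2‖ ≤ r / 4} with hD
  have hD1 : ∀ p ∈ D, p.1 ∈ Metric.closedBall x0 r := by
    rintro p ⟨h1, -⟩
    rw [mem_closedBall_iff_norm]
    linarith
  have hD2 : ∀ p ∈ D, p.2 ∈ Metric.closedBall x0 r := by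
    rintro p ⟨h1, h2⟩
    rw [mem_closedBall_iff_norm]
    calc ‖p.2 - x0‖ = ‖(p.1 - x0) - (p.1 - p.2)‖ := by congr 1; abel
      _ ≤ ‖p.1 - x0‖ + ‖p.1 - p.2‖ := norm_sub_le _ _
      _ ≤ r := by linarith
  have hDc : IsCompact D := by
    refine ((isCompact_closedBall x0 r).prod (isCompact_closedBall x0 r)).of_isClosed_subset ?_
      (fun p hp => ⟨hD1 p hp, hD2 p hp⟩)
    have c1 : Continuous (fun p : EuclideanSpace ℝ (Fin n) × EuclideanSpace ℝ (Fin n) =>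
      ‖p.1 - x0‖) := by fun_prop
    have c2 : Continuous (fun p : EuclideanSpace ℝ (Fin n) × EuclideanSpace ℝ (Fin n) =>
      ‖p.1 - p.2‖) := by fun_prop
    exact (isClosed_le c1 continuous_const).inter (isClosed_le c2 continuous_const)
  have hx0D : (x0, x0) ∈ D := by
    constructor <;> simp <;> linarith
  have hΦc : ContinuousOn Φ D := by
    have hwc : ContinuousOn w (Metric.closedBall x0 r) := fun x hx =>
      (hw x hx).continuousAt.continuousWithinAt
    have h1 : ContinuousOn (fun p : EuclideanSpace ℝ (Fin n) × EuclideanSpace ℝ (Fin n) => w p.1) D :=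
      hwc.comp continuous_fst.continuousOn hD1
    have h2 : ContinuousOn (fun p : EuclideanSpace ℝ (Fin n) × EuclideanSpace ℝ (Fin n) => w p.2) D :=
      hwc.comp continuous_snd.continuousOn hD2
    have h3 : Continuous (fun p : EuclideanSpace ℝ (Fin n) × EuclideanSpace ℝ (Fin n) =>
        modF c (‖p.1 - p.2‖ ^ 2)) := by
      unfold modF
      have h4 : Continuous (fun p : EuclideanSpace ℝ (Fin n) × EuclideanSpace ℝ (Fin n) =>
        ‖p.1 - p.2‖ ^ 2) := by fun_prop
      exact (h4.rpow_const fun _ => Or.inr (by norm_num)).sub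
        (continuous_const.mul (h4.rpow_const fun _ => Or.inr (by norm_num)))
    have h5 : Continuous (fun p : EuclideanSpace ℝ (Fin n) × EuclideanSpace ℝ (Fin n) =>
        m' * ‖p.1 - x0‖ ^ 2) := by fun_prop
    exact ((h1.sub h2).sub (continuous_const.mul h3).continuousOn).sub h5.continuousOn
  obtain ⟨⟨x, y⟩, hxyD, hmax⟩ := hDc.exists_isMaxOn ⟨_, hx0D⟩ hΦc
  -- it suffices that the maximum is not positive
  suffices hle : Φ (x, y) ≤ 0 by
    intro z hz
    have hzD : (x0, z) ∈ D := ⟨by simp; linarith, hz⟩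
    have h1 : Φ (x0, z) ≤ 0 := (hmax hzD).trans hle
    simp only [hΦ, sub_self, norm_zero] at h1
    have h2 := mul_le_mul_of_nonneg_left (hF _ (norm_nonneg (x0 - z)) hz).2 hm0.le
    linarith
  by_contra! hpos
  have hxB := hD1 _ hxyD
  have hyB := hD2 _ hxyD
  obtain ⟨hx2, hxy4⟩ := hxyD
  simp only at hx2 hxy4 hxB hyB
  set s : ℝ := ‖x - y‖ with hs
  have hs0 : 0 ≤ s := norm_nonneg _
  have hΦv : Φ (x, y) = w x - w y - m * modF c (s ^ 2) - m' * ‖x - x0‖ ^ 2 := rfl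
  rw [hΦv] at hpos
  have hFs := hF s hs0 hxy4
  have hFs0 : 0 ≤ m * modF c (s ^ 2) := mul_nonneg hm0.le (by linarith [hFs.1])
  have hNx := abs_le.1 (hwN x hxB)
  have hNy := abs_le.1 (hwN y hyB)
  have hq0 : 0 ≤ m' * ‖x - x0‖ ^ 2 := by positivity
  have hspos : 0 < s := by
    rcases hs0.eq_or_lt with h | h
    · have : x = y := by
        rw [← sub_eq_zero, ← norm_eq_zero, ← hs, ← h]
      rw [this] at hpos hq0
      linarith
    · exact h
  -- the maximum lies in the interior of `D`
  have hs4 : s < r / 4 := by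
    refine lt_of_le_of_ne hxy4 fun h => ?_
    have h1 := mul_le_mul_of_nonneg_left hFs.1 hm0.le
    have h2 : m * (2 / 3 * s) = M * N / 6 := by rw [h, hm]; field_simp; norm_num
    nlinarith
  have hx2' : ‖x - x0‖ < r / 2 := by
    refine lt_of_le_of_ne hx2 fun h => ?_
    have h2 : m' * ‖x - x0‖ ^ 2 = 2 * N := by rw [h, hm']; field_simp; norm_num
    linarith
  have hloc : IsLocalMax Φ (x, y) := by
    have h1 : ∀ᶠ p in 𝓝 (x, y), p ∈ D := by
      have c1 : ContinuousAt (fun p : EuclideanSpace ℝ (Fin n) × EuclideanSpace ℝ (Fin n) =>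
        ‖p.1 - x0‖) (x, y) := by fun_prop
      have c2 : ContinuousAt (fun p : EuclideanSpace ℝ (Fin n) × EuclideanSpace ℝ (Fin n) =>
        ‖p.1 - p.2‖) (x, y) := by fun_prop
      filter_upwards [c1.eventually (gt_mem_nhds hx2'), c2.eventually (gt_mem_nhds hs4)]
        with p a b using ⟨le_of_lt a, le_of_lt b⟩
    filter_upwards [h1] with p hp using hmax hp
  have hline : ∀ ξ η : EuclideanSpace ℝ (Fin n),
      IsLocalMax (fun t : ℝ => Φ (x + t • ξ, y + t • η)) 0 := by
    intro ξ η
    have hc : Tendsto (fun t : ℝ => (x + t • ξ, y + t • η)) (𝓝 0) (𝓝 (x, y)) := by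
      have : ContinuousAt (fun t : ℝ => (x + t • ξ, y + t • η)) 0 := by fun_prop
      simpa [ContinuousAt] using this
    have := hc.eventually hloc
    filter_upwards [this] with t ht
    simpa using ht
  have hpen : ∀ ξ : EuclideanSpace ℝ (Fin n), HD2 (fun t : ℝ => m' * ‖x + t • ξ - x0‖ ^ 2)
      (m' * (2 * inner ℝ (x - x0) ξ)) (m' * (2 * ‖ξ‖ ^ 2)) := by
    intro ξ
    have e : (fun t : ℝ => m' * ‖x + t • ξ - x0‖ ^ 2) = fun t => m' *
        (‖x - x0‖ ^ 2 + (2 * inner ℝ (x - x0) ξ) * t + ‖ξ‖ ^ 2 * t ^ 2) := by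
      funext t
      rw [show x + t • ξ - x0 = (x - x0) + t • ξ by abel, norm_add_sq_real, inner_smul_right,
        norm_smul, mul_pow, Real.norm_eq_abs, sq_abs]
      ring
    rw [e]
    exact (HD2.quad _ _ _).const_mul m'
  have hmod : ∀ ζ : EuclideanSpace ℝ (Fin n), ∀ t : ℝ, ‖(x - y) + t • ζ‖ ^ 2 =
      s ^ 2 + (2 * inner ℝ (x - y) ζ) * t + ‖ζ‖ ^ 2 * t ^ 2 := by
    intro ζ t
    rw [norm_add_sq_real, inner_smul_right, norm_smul, mul_pow, Real.norm_eq_abs, sq_abs]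
    ring
  -- moving both points in the same direction leaves `x - y` unchanged
  have hdiag : ∀ ξ : EuclideanSpace ℝ (Fin n),
      fderiv ℝ w x ξ - fderiv ℝ w y ξ = m' * (2 * inner ℝ (x - x0) ξ) ∧
      qf (hess w x) ξ - qf (hess w y) ξ ≤ m' * (2 * ‖ξ‖ ^ 2) := by
    intro ξ
    have h := (((HD2.line (hw x hxB) ξ).sub (HD2.line (hw y hyB) ξ)).sub
      ((HD2.quad (m * modF c (s ^ 2)) 0 0))).sub (hpen ξ)
    have e : (fun t : ℝ => w (x + t • ξ) - w (y + t • ξ) -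
        (m * modF c (s ^ 2) + 0 * t + 0 * t ^ 2) - m' * ‖x + t • ξ - x0‖ ^ 2) =
        fun t : ℝ => Φ (x + t • ξ, y + t • ξ) := by
      funext t
      simp only [hΦ, add_sub_add_right_eq_sub, ← hs]
      ring
    rw [e] at h
    obtain ⟨h1, h2⟩ := h.of_isLocalMax (hline ξ ξ)
    constructor <;> linarith
  -- moving `y` alone
  have hK : ∀ η : EuclideanSpace ℝ (Fin n), -qf (hess w y) η ≤ m / s * ‖η‖ ^ 2 := by
    intro η
    have h := ((HD2.quad (w x - m' * ‖x - x0‖ ^ 2) 0 0).sub (HD2.line (hw y hyB) η)).sub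
      ((HD2.modF (c := c) (β := 2 * inner ℝ (x - y) (-η)) (γ := ‖-η‖ ^ 2) hspos).const_mul m)
    have e : (fun t : ℝ => (w x - m' * ‖x - x0‖ ^ 2) + 0 * t + 0 * t ^ 2 - w (y + t • η) -
        m * modF c (s ^ 2 + 2 * inner ℝ (x - y) (-η) * t + ‖-η‖ ^ 2 * t ^ 2)) =
        fun t : ℝ => Φ (x + t • (0 : EuclideanSpace ℝ (Fin n)), y + t • η) := by
      funext t
      simp only [hΦ, smul_zero, add_zero]
      rw [← hmod (-η) t, show x - y + t • -η = x - (y + t • η) by rw [smul_neg]; abel]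
      ring
    rw [e] at h
    obtain ⟨-, h2⟩ := h.of_isLocalMax (hline 0 η)
    rw [norm_neg] at h2
    have hss : 0 < √s := Real.sqrt_pos.2 hspos
    have k1 : -(1 / 4) / s ^ 3 + c * (3 / 16) / (s ^ 2 * √s) ≤ 0 := by
      have e1 : -(1 / 4) / s ^ 3 + c * (3 / 16) / (s ^ 2 * √s) =
          (-(1 / 4) + (c * √s) * (3 / 16)) / s ^ 3 := by
        have : s ^ 3 = s ^ 2 * √s * √s := by
          rw [mul_assoc, Real.mul_self_sqrt hs0]; ring
        rw [this]
        field_simp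
      rw [e1]
      exact div_nonpos_of_nonpos_of_nonneg (by linarith [hcs s hxy4]) (by positivity)
    have k2 := mul_nonpos_of_nonpos_of_nonneg k1 (sq_nonneg (2 * inner ℝ (x - y) (-η)))
    have k3 : 0 ≤ c * (3 / 2) / √s * ‖η‖ ^ 2 := by positivity
    have k4 := mul_le_mul_of_nonneg_left (show ((-(1 / 4) / s ^ 3 + c * (3 / 16) / (s ^ 2 * √s)) *
      (2 * inner ℝ (x - y) (-η)) ^ 2 + (1 / s - c * (3 / 2) / √s) * ‖η‖ ^ 2) ≤ 1 / s * ‖η‖ ^ 2 by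
        linarith) hm0.le
    have k5 : m * (1 / s * ‖η‖ ^ 2) = m / s * ‖η‖ ^ 2 := by ring
    linarith
  -- moving the two points apart along the unit vector `e = (x - y) / s`
  set e : EuclideanSpace ℝ (Fin n) := s⁻¹ • (x - y) with he
  have hen : ‖e‖ = 1 := by
    rw [he, norm_smul, norm_inv, norm_norm, ← hs]
    field_simp
  have hsplit : qf (hess w x) e - qf (hess w y) e ≤ 2 * m' - 2 * m / (√r * √s) := by
    have hin : inner ℝ (x - y) ((2 : ℝ) • e) = 2 * s := by
      rw [he, inner_smul_right, inner_smul_right, real_inner_self_eq_norm_sq, ← hs]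
      field_simp
    have hn2 : ‖(2 : ℝ) • e‖ ^ 2 = 4 := by
      rw [norm_smul, hen]; norm_num
    have h := ((((HD2.line (hw x hxB) e).sub (HD2.line (hw y hyB) (-e))).sub
      ((HD2.modF (c := c) (β := 2 * (2 * s)) (γ := 4) hspos).const_mul m))).sub (hpen e)
    have e1 : (fun t : ℝ => w (x + t • e) - w (y + t • -e) -
        m * modF c (s ^ 2 + 2 * (2 * s) * t + 4 * t ^ 2) - m' * ‖x + t • e - x0‖ ^ 2) =
        fun t : ℝ => Φ (x + t • e, y + t • -e) := by
      funext t
      simp only [hΦ]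
      have := hmod ((2 : ℝ) • e) t
      rw [hin, hn2] at this
      rw [← this, show x - y + t • (2 : ℝ) • e = x + t • e - (y + t • -e) by
        rw [smul_neg, smul_comm, two_smul]; abel]
    rw [e1] at h
    obtain ⟨-, h2⟩ := h.of_isLocalMax (hline e (-e))
    have h3 : qf (hess w y) (WithLp.ofLp (-e)) = qf (hess w y) e := by
      simp [qf]
    rw [hen, h3] at h2
    have hss : 0 < √s := Real.sqrt_pos.2 hspos
    have h4 : m * ((-(1 / 4) / s ^ 3 + c * (3 / 16) / (s ^ 2 * √s)) * (2 * (2 * s)) ^ 2 +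
        (1 / s - c * (3 / 2) / √s) * 4) = - (2 * m / (√r * √s)) := by
      rw [hc]
      field_simp
      ring
    linarith
  -- the oscillation of the coefficients between `x` and `y`
  set ε : ℝ := L * (2 * m' * ‖x - x0‖) with hε
  have hε0 : 0 ≤ ε := by positivity
  have hosc : ∀ i j, |b x i j - b y i j| ≤ ε := by
    intro i j
    refine (hLip x hxB y hyB i j).trans (mul_le_mul_of_nonneg_left ?_ hL)
    refine ContinuousLinearMap.opNorm_le_bound _ (by positivity) fun ξ => ?_
    rw [sub_apply, (hdiag ξ).1, Real.norm_eq_abs, abs_mul, abs_mul, abs_of_pos hm'0,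
      abs_two]
    have := abs_real_inner_le_norm (x - x0) ξ
    nlinarith
  have hG : m' * ‖x - x0‖ ^ 2 ≤ G * s := by
    have h1 := (convex_closedBall x0 r).norm_image_sub_le_of_norm_fderiv_le
      (fun z hz => (hw z hz).differentiableAt (by norm_num)) hwG hyB hxB
    have h2 := (le_abs_self _).trans h1
    rw [← hs] at h2
    linarith
  have hss : 0 < √s := Real.sqrt_pos.2 hspos
  set η : ℝ := lam ^ 2 / (2 * n ^ 2 * Lam) with hη
  have hη0 : 0 < η := by positivity
  have hεs : ε ≤ η * (√s / √r) := by
    refine le_of_sq_le_sq ?_ (by positivity)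
    have h1 : ε ^ 2 = 4 * L ^ 2 * m' * (m' * ‖x - x0‖ ^ 2) := by rw [hε]; ring
    have h2 : (η * (√s / √r)) ^ 2 = η ^ 2 * (s / r) := by
      rw [mul_pow, div_pow (√s), Real.sq_sqrt hs0, Real.sq_sqrt hr.le]
    rw [h1, h2]
    calc 4 * L ^ 2 * m' * (m' * ‖x - x0‖ ^ 2) ≤ 4 * L ^ 2 * m' * (G * s) := by gcongr
      _ = (32 * L ^ 2 * N * G) * (s / r ^ 2) := by rw [hm']; field_simp; ring
      _ ≤ (η ^ 2 * r) * (s / r ^ 2) := by gcongr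
      _ = η ^ 2 * (s / r) := by field_simp
  have key := doubling_algebra (b x) (b y) (hess w x) (hess w y) lam Lam ε (m / s) m'
    (2 * m / (√r * √s)) hlam hLam (by positivity) hm'0.le hε0 (hb1 x) (hb2 x) (hb1 y) (hb2 y) hosc
    (hess_symm (hw x hxB)) (hess_symm (hw y hyB)) (heq x hxB) (heq y hyB)
    (fun v => by
      have := (hdiag (WithLp.toLp 2 v)).2
      rw [norm_sq_eq_sum] at this
      simp only at this
      linarith)
    (fun v => by
      have := hK (WithLp.toLp 2 v)
      rwa [norm_sq_eq_sum] at this)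
    e (by rw [← norm_sq_eq_sum, hen]; norm_num) hsplit
  have k1 : 2 * ε * (m / s) * n ^ 2 * Lam / lam ≤ lam * (m / (√r * √s)) := by
    calc 2 * ε * (m / s) * n ^ 2 * Lam / lam
        ≤ 2 * (η * (√s / √r)) * (m / s) * n ^ 2 * Lam / lam := by gcongr
      _ = lam * (m / (√r * √s)) := by
          have : s = √s * √s := (Real.mul_self_sqrt hs0).symm
          rw [hη]
          conv_lhs => rw [show m / s = m / (√s * √s) by rw [← this]]
          field_simp
  have k2 : 2 / r ≤ 1 / (√r * √s) := by
    rw [div_le_div_iff₀ hr (by positivity)]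
    have h1 : √s ≤ √r / 2 := by
      rw [Real.sqrt_le_left (by positivity), div_pow, Real.sq_sqrt hr.le]
      linarith
    have h2 := mul_le_mul_of_nonneg_left h1 hsr.le
    have h3 := Real.mul_self_sqrt hr.le
    linarith
  have k3 : lam * (m * (2 / r)) ≤ 2 * m' * n * Lam := by
    have h1 : lam * (m * (2 / r)) ≤ lam * (m * (1 / (√r * √s))) := by gcongr
    have h2 : lam * (m * (1 / (√r * √s))) = lam * (m / (√r * √s)) := by ring
    have h3 : lam * (2 * m / (√r * √s)) = 2 * (lam * (m / (√r * √s))) := by ring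
    linarith
  have k4 : lam * (m * (2 / r)) = 2 * m' * n * Lam + 34 * lam * N / r ^ 2 := by
    rw [hm, hm', hM]
    field_simp
    ring
  have k5 : 0 < 34 * lam * N / r ^ 2 := by positivity
  linarith

lemma fderiv_neg_fun {n : ℕ} (w : EuclideanSpace ℝ (Fin n) → ℝ) :
    fderiv ℝ (fun x => -w x) = fun x => -fderiv ℝ w x := by
  funext x
  exact fderiv_fun_neg

lemma hess_neg {n : ℕ} (w : EuclideanSpace ℝ (Fin n) → ℝ) (x : EuclideanSpace ℝ (Fin n))
    (i j : Fin n) : hess (fun x => -w x) x i j = -hess w x i j := by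
  simp only [hess, fderiv_neg_fun]
  rw [fderiv_fun_neg]
  simp

lemma tp_hess_neg {n : ℕ} (M : Fin n → Fin n → ℝ) (w : EuclideanSpace ℝ (Fin n) → ℝ)
    (x : EuclideanSpace ℝ (Fin n)) : tp M (hess (fun x => -w x) x) = -tp M (hess w x) := by
  simp [tp, hess_neg, Finset.sum_neg_distrib]

/-- Interior gradient estimate: `|∇w(x₀)| ≤ M sup|w| / r`. -/
lemma grad_est {n : ℕ} (hn : 0 < n) (w : EuclideanSpace ℝ (Fin n) → ℝ)
    (b : EuclideanSpace ℝ (Fin n) → Fin n → Fin n → ℝ) (x0 : EuclideanSpace ℝ (Fin n))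
    (r N G L lam Lam : ℝ) (hr : 0 < r) (hN : 0 < N) (hL : 0 ≤ L)
    (hlam : 0 < lam) (hLam : lam ≤ Lam)
    (hw : ∀ x ∈ Metric.closedBall x0 r, ContDiffAt ℝ 2 w x)
    (hb1 : ∀ x v, lam * ∑ i, v i ^ 2 ≤ qf (b x) v)
    (hb2 : ∀ x v, qf (b x) v ≤ Lam * ∑ i, v i ^ 2)
    (heq : ∀ x ∈ Metric.closedBall x0 r, tp (b x) (hess w x) = 0)
    (hwN : ∀ x ∈ Metric.closedBall x0 r, |w x| ≤ N)
    (hwG : ∀ x ∈ Metric.closedBall x0 r, ‖fderiv ℝ w x‖ ≤ G)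
    (hLip : ∀ x ∈ Metric.closedBall x0 r, ∀ y ∈ Metric.closedBall x0 r, ∀ i j,
      |b x i j - b y i j| ≤ L * ‖fderiv ℝ w x - fderiv ℝ w y‖)
    (hsmall : 32 * L ^ 2 * N * G ≤ (lam ^ 2 / (2 * n ^ 2 * Lam)) ^ 2 * r) :
    ‖fderiv ℝ w x0‖ ≤ (8 * n * Lam / lam + 17) * N / r := by
  have hLam0 : 0 < Lam := hlam.trans_le hLam
  have h1 := grad_core hn w b x0 r N G L lam Lam hr hN hL hlam hLam hw hb1 hb2 heq hwN hwG hLip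
    hsmall
  have h2 := grad_core hn (fun x => -w x) b x0 r N G L lam Lam hr hN hL hlam hLam
    (fun x hx => (hw x hx).neg) hb1 hb2
    (fun x hx => by rw [tp_hess_neg, heq x hx, neg_zero])
    (fun x hx => by rw [abs_neg]; exact hwN x hx)
    (fun x hx => by rw [fderiv_neg_fun, norm_neg]; exact hwG x hx)
    (fun x hx y hy i j => by
      simp only [fderiv_neg_fun]
      rw [← neg_sub', norm_neg]
      exact hLip x hx y hy i j) hsmall
  have hx0 : x0 ∈ Metric.closedBall x0 r := Metric.mem_closedBall_self hr.le
  refine ((hw x0 hx0).differentiableAt (by norm_num)).hasFDerivAt.le_of_lip' (by positivity) ?_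
  filter_upwards [Metric.closedBall_mem_nhds x0 (by positivity : 0 < r / 4)] with y hy
  rw [mem_closedBall_iff_norm'] at hy
  have a1 := h1 y hy
  have a2 := h2 y hy
  rw [norm_sub_rev y x0, Real.norm_eq_abs, abs_le]
  constructor <;> linarith

/-! ### Decay of solutions by comparison with the fundamental solution -/

/-- The product `B x` of a square array and a vector. -/
def mv {n : ℕ} (B : Fin n → Fin n → ℝ) (x : Fin n → ℝ) (j : Fin n) : ℝ := ∑ k, B j k * x k

lemma qf_eq_mv {n : ℕ} (B : Fin n → Fin n → ℝ) (x : Fin n → ℝ) :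
    qf B x = ∑ i, x i * mv B x i := by
  simp only [qf, mv, Finset.mul_sum]
  exact Finset.sum_congr rfl fun i _ => Finset.sum_congr rfl fun j _ => by ring

lemma qf_line {n : ℕ} (B : Fin n → Fin n → ℝ) (hB : ∀ i j, B i j = B j i) (x ξ : Fin n → ℝ)
    (t : ℝ) : qf B (fun i => x i + t * ξ i) =
      qf B x + (2 * ∑ i, mv B x i * ξ i) * t + qf B ξ * t ^ 2 := by
  have h1 : ∑ i, mv B x i * ξ i = ∑ i, ∑ j, B i j * ξ i * x j := by
    simp only [mv, Finset.sum_mul]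
    exact Finset.sum_congr rfl fun i _ => Finset.sum_congr rfl fun j _ => by ring
  have h2 : ∑ i, mv B x i * ξ i = ∑ i, ∑ j, B i j * x i * ξ j := by
    simp only [mv, Finset.sum_mul]
    rw [Finset.sum_comm]
    exact Finset.sum_congr rfl fun i _ => Finset.sum_congr rfl fun j _ => by rw [hB i j]
  have h3 : 2 * ∑ i, mv B x i * ξ i =
      ∑ i, ∑ j, B i j * ξ i * x j + ∑ i, ∑ j, B i j * x i * ξ j := by
    rw [two_mul]
    nth_rw 1 [h1]
    rw [h2]
  rw [h3]
  simp only [qf, ← Finset.sum_add_distrib, Finset.sum_mul]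
  exact Finset.sum_congr rfl fun i _ => Finset.sum_congr rfl fun j _ => by ring

/-- The inverse `B` of a symmetric elliptic matrix `A`, with the properties of the form
`q(x) = ⟨x, Bx⟩` used to build the fundamental solution `q^((2-n)/2)` of `tr(A D²)`. -/
lemma exists_inverse_form {n : ℕ} (A : Fin n → Fin n → ℝ) (lam : ℝ) (hlam : 0 < lam)
    (hAs : ∀ i j, A i j = A j i) (hA : ∀ v, lam * ∑ i, v i ^ 2 ≤ qf A v) :
    ∃ B : Fin n → Fin n → ℝ, (∀ i j, B i j = B j i) ∧ tp A B = n ∧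
      (∀ x, qf A (mv B x) = qf B x) ∧ (∀ x, lam * ∑ i, mv B x i ^ 2 ≤ qf B x) ∧
      (∃ c1 > 0, ∀ x, c1 * ∑ i, x i ^ 2 ≤ qf B x) ∧
      (∃ c2 > 0, ∀ x, qf B x ≤ c2 * ∑ i, x i ^ 2) ∧ ∃ β ≥ 0, ∀ i j, |B i j| ≤ β := by
  have hinj : Function.Injective (Matrix.of A).mulVec := by
    intro u v huv
    have h1 : (Matrix.of A).mulVec (u - v) = 0 := by
      rw [Matrix.mulVec_sub, sub_eq_zero]
      exact huv
    have h2 := hA (u - v)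
    have h3 : qf A (u - v) = 0 := by
      rw [qf_eq_mv]
      refine Finset.sum_eq_zero fun i _ => ?_
      have : mv A (u - v) i = 0 := by
        have := congrFun h1 i
        simpa [Matrix.mulVec, dotProduct, mv] using this
      rw [this, mul_zero]
    rw [h3] at h2
    have h4 : ∑ i, (u - v) i ^ 2 ≤ 0 := by
      by_contra! h
      have := mul_pos hlam h
      linarith
    funext i
    have h5 := (Finset.sum_eq_zero_iff_of_nonneg (fun i _ => sq_nonneg ((u - v) i))).1
      (le_antisymm h4 (Finset.sum_nonneg fun i _ => sq_nonneg _)) i (Finset.mem_univ i)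
    have h6 : (u - v) i = 0 := by simpa using h5
    exact sub_eq_zero.1 h6
  have hunit : IsUnit (Matrix.of A) := Matrix.mulVec_injective_iff_isUnit.1 hinj
  have hdet : IsUnit (Matrix.of A).det := (Matrix.isUnit_iff_isUnit_det _).1 hunit
  have hAT : (Matrix.of A).transpose = Matrix.of A := by
    ext i j
    exact hAs j i
  have hBT : ((Matrix.of A)⁻¹).transpose = (Matrix.of A)⁻¹ := by
    rw [Matrix.transpose_nonsing_inv, hAT]
  set B : Fin n → Fin n → ℝ := fun i j => (Matrix.of A)⁻¹ i j with hB
  have hBs : ∀ i j, B i j = B j i := fun i j => congrFun (congrFun hBT j) i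
  have hAB : ∀ i k, ∑ j, A i j * B j k = if i = k then 1 else 0 := by
    intro i k
    have := congrFun (congrFun (Matrix.mul_nonsing_inv _ hdet) i) k
    simpa [Matrix.mul_apply, Matrix.one_apply] using this
  have hABx : ∀ x i, mv A (mv B x) i = x i := by
    intro x i
    simp only [mv, Finset.mul_sum]
    rw [Finset.sum_comm]
    have : ∀ k, ∑ j, A i j * (B j k * x k) = (if i = k then 1 else 0) * x k := by
      intro k
      rw [← hAB i k, Finset.sum_mul]
      exact Finset.sum_congr rfl fun j _ => by ring
    simp [this]
  have hq : ∀ x, qf A (mv B x) = qf B x := by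
    intro x
    rw [qf_eq_mv, qf_eq_mv]
    exact Finset.sum_congr rfl fun i _ => by rw [hABx, mul_comm]
  have hlow : ∀ x, lam * ∑ i, mv B x i ^ 2 ≤ qf B x := fun x => by rw [← hq]; exact hA _
  refine ⟨B, hBs, ?_, hq, hlow, ?_, ?_, ∑ i, ∑ j, |B i j|, by positivity, ?_⟩
  · have : ∀ i, ∑ j, A i j * B i j = 1 := by
      intro i
      have := hAB i i
      simp only [if_true] at this
      rw [← this]
      exact Finset.sum_congr rfl fun j _ => by rw [hBs i j]
    simp [tp, this]
  · set S : ℝ := ∑ i, ∑ j, A i j ^ 2 with hS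
    have hS0 : 0 ≤ S := by positivity
    refine ⟨lam / (S + 1), by positivity, fun x => ?_⟩
    have h1 : ∑ i, x i ^ 2 ≤ S * ∑ i, mv B x i ^ 2 := by
      rw [hS, Finset.sum_mul]
      refine Finset.sum_le_sum fun i _ => ?_
      have h2 := Finset.sum_mul_sq_le_sq_mul_sq Finset.univ (A i) (mv B x)
      have h3 : ∑ j, A i j * mv B x j = x i := hABx x i
      rwa [h3] at h2
    have h4 : 0 ≤ ∑ i, mv B x i ^ 2 := by positivity
    rw [div_mul_eq_mul_div, div_le_iff₀ (by positivity)]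
    calc lam * ∑ i, x i ^ 2 ≤ lam * (S * ∑ i, mv B x i ^ 2) := by gcongr
      _ = (lam * ∑ i, mv B x i ^ 2) * S := by ring
      _ ≤ qf B x * S := mul_le_mul_of_nonneg_right (hlow x) hS0
      _ ≤ qf B x * (S + 1) := by
        have : 0 ≤ qf B x := le_trans (by positivity) (hlow x)
        nlinarith
  · refine ⟨1 / lam, by positivity, fun x => ?_⟩
    have h1 : qf B x ≤ (1 / lam * ∑ i, x i ^ 2) / 2 + (lam * ∑ i, mv B x i ^ 2) / 2 := by
      rw [qf_eq_mv, Finset.mul_sum, Finset.mul_sum, Finset.sum_div, Finset.sum_div,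
        ← Finset.sum_add_distrib]
      refine Finset.sum_le_sum fun i _ => ?_
      have h2 : 1 / lam * x i ^ 2 / 2 + lam * mv B x i ^ 2 / 2 - x i * mv B x i =
          (x i - lam * mv B x i) ^ 2 / (2 * lam) := by
        field_simp
        ring
      have h3 : 0 ≤ (x i - lam * mv B x i) ^ 2 / (2 * lam) := by positivity
      linarith
    have := hlow x
    linarith
  · intro i j
    have h1 : |B i j| ≤ ∑ j, |B i j| :=
      Finset.single_le_sum (f := fun j => |B i j|) (fun _ _ => abs_nonneg _) (Finset.mem_univ j)
    have h2 : ∑ j, |B i j| ≤ ∑ i, ∑ j, |B i j| :=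
      Finset.single_le_sum (f := fun i => ∑ j, |B i j|)
        (fun _ _ => Finset.sum_nonneg fun _ _ => abs_nonneg _) (Finset.mem_univ i)
    exact h1.trans h2

/-- The radial profile `q^((2-n)/2) - q^((1-n)/2)` of the barrier. The first term is the
fundamental solution, the second makes the barrier a strict supersolution. -/
noncomputable def barF (n : ℕ) (q : ℝ) : ℝ :=
  q ^ (-((n : ℝ) - 2) / 2) - q ^ (-((n : ℝ) - 1) / 2)

/-- First derivative of `barF`. -/
noncomputable def barF1 (n : ℕ) (q : ℝ) : ℝ :=
  -((n : ℝ) - 2) / 2 * q ^ (-((n : ℝ) - 2) / 2 - 1) -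
    -((n : ℝ) - 1) / 2 * q ^ (-((n : ℝ) - 1) / 2 - 1)

/-- Second derivative of `barF`. -/
noncomputable def barF2 (n : ℕ) (q : ℝ) : ℝ :=
  -((n : ℝ) - 2) / 2 * (-((n : ℝ) - 2) / 2 - 1) * q ^ (-((n : ℝ) - 2) / 2 - 2) -
    -((n : ℝ) - 1) / 2 * (-((n : ℝ) - 1) / 2 - 1) * q ^ (-((n : ℝ) - 1) / 2 - 2)

lemma HD2.barF (n : ℕ) {q β γ : ℝ} (hq : 0 < q) :
    HD2 (fun t => barF n (q + β * t + γ * t ^ 2)) (barF1 n q * β)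
      (barF2 n q * β ^ 2 + barF1 n q * (2 * γ)) := by
  have h := (HD2.rpow_quad q β γ (-((n : ℝ) - 2) / 2) hq).sub
    (HD2.rpow_quad q β γ (-((n : ℝ) - 1) / 2) hq)
  unfold _root_.barF barF1 barF2
  convert h using 1 <;> ring

/-- The Hessian of `barF n ∘ qf B` at `x`. -/
noncomputable def barH {n : ℕ} (B : Fin n → Fin n → ℝ) (x : Fin n → ℝ) (i j : Fin n) : ℝ :=
  4 * barF2 n (qf B x) * (mv B x i * mv B x j) + 2 * barF1 n (qf B x) * B i j

lemma tp_outer {n : ℕ} (M : Fin n → Fin n → ℝ) (y : Fin n → ℝ) :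
    tp M (fun i j => y i * y j) = qf M y := by
  simp only [tp, qf]
  exact Finset.sum_congr rfl fun i _ => Finset.sum_congr rfl fun j _ => by ring

lemma qf_outer {n : ℕ} (y v : Fin n → ℝ) :
    qf (fun i j => y i * y j) v = (∑ i, y i * v i) ^ 2 := by
  rw [pow_two, Finset.sum_mul_sum]
  exact Finset.sum_congr rfl fun i _ => Finset.sum_congr rfl fun j _ => by ring

/-- Where `M` is within `δ` of `A` and `δ √q` is small, the barrier is a strict supersolution:
the contribution of `A` is exactly `-(n-1) q^(-(n+1)/2)`. -/
lemma barrier_neg {n : ℕ} (hn : 3 ≤ n) (A B M : Fin n → Fin n → ℝ) (lam β δ : ℝ)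
    (hlam : 0 < lam) (hδ : 0 ≤ δ) (x : Fin n → ℝ)
    (hAB : tp A B = n) (hq : qf A (mv B x) = qf B x) (hlow : lam * ∑ i, mv B x i ^ 2 ≤ qf B x)
    (hβ : ∀ i j, |B i j| ≤ β) (hM : ∀ i j, |M i j - A i j| ≤ δ)
    (hq1 : 1 ≤ qf B x) (hsm : δ * √(qf B x) * (n ^ 3 * (8 / lam + 2 * β)) < n - 1) :
    tp M (barH B x) < 0 := by
  have hn3 : (3 : ℝ) ≤ n := by exact_mod_cast hn
  set q := qf B x with hqd
  have hq0 : 0 < q := by linarith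
  set ρ := √q with hρ
  have hρ1 : 1 ≤ ρ := Real.one_le_sqrt.2 hq1
  have hρq : ρ ^ 2 = q := Real.sq_sqrt hq0.le
  have hρ0 : 0 < ρ := by linarith
  set P := q ^ (-((n : ℝ) - 2) / 2 - 2) with hP
  have hP0 : 0 < P := Real.rpow_pos_of_pos hq0 _
  -- all powers of `q` expressed through `P` and `ρ = √q`
  have e1 : q ^ (-((n : ℝ) - 2) / 2 - 1) = P * ρ ^ 2 := by
    rw [hρq, hP, ← Real.rpow_add_one hq0.ne']
    congr 1
    ring
  have e2 : q ^ (-((n : ℝ) - 1) / 2 - 1) = P * ρ := by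
    rw [hρ, Real.sqrt_eq_rpow, hP, ← Real.rpow_add hq0]
    congr 1
    ring
  have e3 : q ^ (-((n : ℝ) - 1) / 2 - 2) = P / ρ := by
    rw [hρ, Real.sqrt_eq_rpow, hP, ← Real.rpow_sub hq0]
    congr 1
    ring
  have f1 : barF1 n q = P * ρ * ((n - 1) / 2 - (n - 2) / 2 * ρ) := by
    rw [barF1, e1, e2]
    ring
  have f2 : barF2 n q = P * ((n - 2) / 2 * (n / 2) - (n - 1) / 2 * ((n + 1) / 2) / ρ) := by
    rw [barF2, e3, ← hP]
    field_simp
    ring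
  have g1 : |barF1 n q| ≤ P * ρ ^ 2 * n := by
    rw [f1, abs_mul, abs_of_pos (by positivity), pow_two, mul_assoc, mul_assoc, mul_assoc]
    refine mul_le_mul_of_nonneg_left (mul_le_mul_of_nonneg_left ?_ hρ0.le) hP0.le
    rw [abs_le]
    constructor <;> nlinarith
  have g2 : |barF2 n q| ≤ P * (2 * n ^ 2) := by
    rw [f2, abs_mul, abs_of_pos hP0]
    refine mul_le_mul_of_nonneg_left ?_ hP0.le
    have k1 : (n - 1 : ℝ) / 2 * ((n + 1) / 2) / ρ ≤ (n - 1) / 2 * ((n + 1) / 2) :=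
      div_le_self (mul_nonneg (by linarith) (by linarith)) hρ1
    have k2 : 0 ≤ (n - 1 : ℝ) / 2 * ((n + 1) / 2) / ρ :=
      div_nonneg (mul_nonneg (by linarith) (by linarith)) hρ0.le
    rw [abs_le]
    constructor <;> nlinarith
  have tA : tp A (barH B x) = -((n - 1) * (P * ρ)) := by
    have : tp A (barH B x) = 4 * barF2 n q * qf A (mv B x) + 2 * barF1 n q * tp A B := by
      rw [← tp_outer, ← tp_add_right]
      rfl
    rw [this, hq, hAB, f1, f2, ← hρq]
    field_simp
    ring
  set D : Fin n → Fin n → ℝ := fun i j => 1 * M i j + (-1) * A i j with hD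
  have hDe : ∀ i j, |D i j| ≤ δ := by
    intro i j
    have : D i j = M i j - A i j := by simp only [hD]; ring
    rw [this]
    exact hM i j
  have tD : tp D (barH B x) = tp M (barH B x) - tp A (barH B x) := by
    rw [hD, tp_add_left]
    ring
  have tD2 : tp D (barH B x) = 4 * barF2 n q * qf D (mv B x) + 2 * barF1 n q * tp D B := by
    rw [← tp_outer, ← tp_add_right]
    rfl
  have hy : ∑ i, mv B x i ^ 2 ≤ ρ ^ 2 / lam := by
    rw [le_div_iff₀ hlam, hρq]
    linarith
  have d1 : |qf D (mv B x)| ≤ δ * n * (ρ ^ 2 / lam) :=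
    (qf_le_of_entries D δ hDe _).trans (by gcongr)
  have d2 : |tp D B| ≤ δ * n ^ 2 * β := by
    have : |tp D B| ≤ ∑ i : Fin n, ∑ j : Fin n, δ * β := by
      refine (Finset.abs_sum_le_sum_abs _ _).trans (Finset.sum_le_sum fun i _ => ?_)
      refine (Finset.abs_sum_le_sum_abs _ _).trans (Finset.sum_le_sum fun j _ => ?_)
      rw [abs_mul]
      exact mul_le_mul (hDe i j) (hβ i j) (abs_nonneg _) hδ
    refine this.trans_eq ?_
    simp
    ring
  have d3 : tp D (barH B x) ≤ P * ρ * (δ * ρ * (n ^ 3 * (8 / lam + 2 * β))) := by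
    calc tp D (barH B x) ≤ |4 * barF2 n q * qf D (mv B x) + 2 * barF1 n q * tp D B| := by
          rw [← tD2]; exact le_abs_self _
      _ ≤ |4 * barF2 n q * qf D (mv B x)| + |2 * barF1 n q * tp D B| := abs_add_le _ _
      _ = 4 * (|barF2 n q| * |qf D (mv B x)|) + 2 * (|barF1 n q| * |tp D B|) := by
          rw [abs_mul, abs_mul, abs_mul, abs_mul, abs_two, abs_of_pos (by norm_num : (0 : ℝ) < 4)]
          ring
      _ ≤ 4 * ((P * (2 * n ^ 2)) * (δ * n * (ρ ^ 2 / lam))) +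
            2 * ((P * ρ ^ 2 * n) * (δ * n ^ 2 * β)) := by gcongr
      _ = P * ρ * (δ * ρ * (n ^ 3 * (8 / lam + 2 * β))) := by ring
  have d4 := mul_lt_mul_of_pos_left hsm (mul_pos hP0 hρ0)
  linarith

lemma barF_lower {n : ℕ} {q : ℝ} (hq : 4 ≤ q) :
    q ^ (-((n : ℝ) - 2) / 2) / 2 ≤ barF n q := by
  have hq0 : 0 < q := by linarith
  have h1 : q ^ (-((n : ℝ) - 1) / 2) = q ^ (-((n : ℝ) - 2) / 2) / √q := by
    rw [Real.sqrt_eq_rpow, ← Real.rpow_sub hq0]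
    congr 1
    ring
  have h2 : 2 ≤ √q := Real.le_sqrt_of_sq_le (by linarith)
  have h3 : q ^ (-((n : ℝ) - 2) / 2) / √q ≤ q ^ (-((n : ℝ) - 2) / 2) / 2 :=
    div_le_div_of_nonneg_left (Real.rpow_nonneg hq0.le _) (by norm_num) h2
  rw [barF, h1]
  linarith

lemma barF_le {n : ℕ} {q : ℝ} (hq : 0 < q) : barF n q ≤ q ^ (-((n : ℝ) - 2) / 2) := by
  have := Real.rpow_pos_of_pos hq (-((n : ℝ) - 1) / 2)
  rw [barF]
  linarith

lemma continuous_qf {n : ℕ} (B : Fin n → Fin n → ℝ) :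
    Continuous fun x : EuclideanSpace ℝ (Fin n) => qf B x := by
  unfold qf
  fun_prop

lemma exists_norm_rpow_le (K σ ε : ℝ) (hσ : 0 < σ) (hε : 0 < ε) :
    ∃ S > 0, ∀ r : ℝ, S ≤ r → K * r ^ (-σ) < ε := by
  have h : Tendsto (fun r : ℝ => K * r ^ (-σ)) atTop (𝓝 (K * 0)) :=
    (tendsto_rpow_neg_atTop hσ).const_mul K
  rw [mul_zero] at h
  obtain ⟨S, hS⟩ := eventually_atTop.1 (h.eventually (gt_mem_nhds hε))
  exact ⟨max S 1, by positivity, fun r hr => hS r ((le_max_left _ _).trans hr)⟩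

/-- The second-derivative test for `w - N · barF (q)` at an interior maximum. -/
lemma no_interior_max {n : ℕ} (w : EuclideanSpace ℝ (Fin n) → ℝ) (B M : Fin n → Fin n → ℝ)
    (lam N : ℝ) (z : EuclideanSpace ℝ (Fin n)) (hlam : 0 < lam) (hN : 0 < N)
    (hB : ∀ i j, B i j = B j i) (hM : ∀ v, lam * ∑ i, v i ^ 2 ≤ qf M v)
    (hw : ContDiffAt ℝ 2 w z) (heq : tp M (hess w z) = 0) (hq : 0 < qf B z)
    (hneg : tp M (barH B z) < 0)
    (hmax : IsLocalMax (fun x : EuclideanSpace ℝ (Fin n) => w x - N * barF n (qf B x)) z) :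
    False := by
  set Z : Fin n → Fin n → ℝ := fun i j => N * barH B z i j + (-1) * hess w z i j with hZ
  have hZs : ∀ i j, Z i j = Z j i := by
    intro i j
    simp only [hZ, barH, hess_symm hw i j, hB i j]
    ring
  have hZp : ∀ v, 0 ≤ qf Z v := by
    intro v
    set ξ : EuclideanSpace ℝ (Fin n) := WithLp.toLp 2 v with hξ
    have h1 := (HD2.line hw ξ).sub ((HD2.barF n (β := 2 * ∑ i, mv B z i * v i)
      (γ := qf B v) hq).const_mul N)
    have h2 : (fun t : ℝ => w (z + t • ξ) - N * barF n (qf B z + (2 * ∑ i, mv B z i * v i) * t +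
        qf B v * t ^ 2)) = (fun x : EuclideanSpace ℝ (Fin n) => w x - N * barF n (qf B x)) ∘
          fun t : ℝ => z + t • ξ := by
      funext t
      rw [← qf_line B hB]
      rfl
    rw [h2] at h1
    have hc : ContinuousAt (fun t : ℝ => z + t • ξ) 0 := by fun_prop
    have h3 : IsLocalMax ((fun x : EuclideanSpace ℝ (Fin n) => w x - N * barF n (qf B x)) ∘
        fun t : ℝ => z + t • ξ) 0 := by
      have hmax' : IsLocalMax (fun x : EuclideanSpace ℝ (Fin n) => w x - N * barF n (qf B x))
        ((fun t : ℝ => z + t • ξ) 0) := by simpa using hmax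
      exact hmax'.comp_continuous (g := fun t : ℝ => z + t • ξ) hc
    have h4 := (h1.of_isLocalMax h3).2
    have h5 : qf (barH B z) v = 4 * barF2 n (qf B z) * (∑ i, mv B z i * v i) ^ 2 +
        2 * barF1 n (qf B z) * qf B v := by
      rw [← qf_outer, ← qf_add]
      rfl
    have h6 : qf (hess w z) ξ = qf (hess w z) v := rfl
    rw [hZ, qf_add, h5]
    rw [h6] at h4
    linarith
  have h7 := tp_ge M Z 0 hZs hZp fun v => by
    have h8 := hM v
    have : 0 ≤ lam * ∑ i, v i ^ 2 := by positivity
    linarith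
  rw [hZ, tp_add_right, heq] at h7
  have := mul_neg_of_pos_of_neg hN hneg
  linarith

/-- One-sided decay: a solution tending to `0` at infinity lies below a multiple of the
barrier, hence below a multiple of `|x|^(2-n)`. -/
lemma comparison {n : ℕ} (hn : 3 ≤ n) (w : EuclideanSpace ℝ (Fin n) → ℝ)
    (b : EuclideanSpace ℝ (Fin n) → Fin n → Fin n → ℝ) (A : Fin n → Fin n → ℝ)
    (lam K σ R : ℝ) (hlam : 0 < lam) (hK : 0 ≤ K) (hσ : 0 < σ) (hR : 0 < R)
    (hAs : ∀ i j, A i j = A j i) (hA : ∀ v, lam * ∑ i, v i ^ 2 ≤ qf A v)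
    (hb : ∀ x v, lam * ∑ i, v i ^ 2 ≤ qf (b x) v)
    (hw : ∀ x, R ≤ ‖x‖ → ContDiffAt ℝ 2 w x)
    (heq : ∀ x, R ≤ ‖x‖ → tp (b x) (hess w x) = 0)
    (hbA : ∀ x, R ≤ ‖x‖ → ∀ i j, |b x i j - A i j| ≤ K * ‖x‖ ^ (-(1 + σ)))
    (hlim : ∀ ε > 0, ∃ S, ∀ x, S ≤ ‖x‖ → |w x| ≤ ε) :
    ∃ R2 ≥ R, ∃ N > 0, ∀ x, R2 ≤ ‖x‖ → w x ≤ N * ‖x‖ ^ (-((n : ℝ) - 2)) := by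
  obtain ⟨B, hBs, hAB, hqq, hlow, ⟨c1, hc1, hq1⟩, ⟨c2, hc2, hq2⟩, β, hβ0, hβ⟩ :=
    exists_inverse_form A lam hlam hAs hA
  have hn3 : (3 : ℝ) ≤ n := by exact_mod_cast hn
  obtain ⟨S1, hS1⟩ := hlim 1 one_pos
  obtain ⟨S2, hS20, hS2⟩ := exists_norm_rpow_le (K * √c2 * (n ^ 3 * (8 / lam + 2 * β))) σ (n - 1)
    hσ (by linarith)
  set R2 := max R (max S1 (max S2 (2 / √c1))) with hR2
  have hRR2 : R ≤ R2 := le_max_left _ _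
  have hSR2 : S1 ≤ R2 := (le_max_left _ _).trans (le_max_right _ _)
  have hS2R2 : S2 ≤ R2 :=
    (le_max_left _ _).trans ((le_max_right _ _).trans (le_max_right _ _))
  have hcR2 : 2 / √c1 ≤ R2 :=
    (le_max_right _ _).trans ((le_max_right _ _).trans (le_max_right _ _))
  have hR20 : 0 < R2 := hR.trans_le hRR2
  have hq4 : ∀ x : EuclideanSpace ℝ (Fin n), R2 ≤ ‖x‖ → 4 ≤ qf B x := by
    intro x hx
    refine le_trans ?_ (hq1 x)
    rw [← norm_sq_eq_sum]
    have h1 : 2 ≤ √c1 * ‖x‖ := by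
      have := (div_le_iff₀ (Real.sqrt_pos.2 hc1)).1 (hcR2.trans hx)
      linarith
    have h2 : c1 * ‖x‖ ^ 2 = (√c1 * ‖x‖) ^ 2 := by
      rw [mul_pow, Real.sq_sqrt hc1.le]
    rw [h2]
    nlinarith
  set e : ℝ := -((n : ℝ) - 2) / 2 with he
  have he0 : e < 0 := by rw [he]; linarith
  set N0 : ℝ := 2 * (c2 * R2 ^ 2) ^ (-e) with hN0
  have hN00 : 0 < N0 := by positivity
  set h : EuclideanSpace ℝ (Fin n) → ℝ := fun x => w x - N0 * barF n (qf B x) with hh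
  have hbpos : ∀ x : EuclideanSpace ℝ (Fin n), R2 ≤ ‖x‖ → 0 ≤ N0 * barF n (qf B x) := by
    intro x hx
    have := hq4 x hx
    refine mul_nonneg hN00.le (le_trans ?_ (barF_lower this))
    have : 0 ≤ qf B x := by linarith
    positivity
  have hcont : ContinuousOn h {x | R2 ≤ ‖x‖} := by
    intro x hx
    have hx4 := hq4 x hx
    have hqc : ContinuousAt (fun x : EuclideanSpace ℝ (Fin n) => qf B x) x :=
      (continuous_qf B).continuousAt
    have hbc : ContinuousAt (fun x : EuclideanSpace ℝ (Fin n) => barF n (qf B x)) x :=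
      (hqc.rpow_const (Or.inl (by linarith))).sub (hqc.rpow_const (Or.inl (by linarith)))
    exact ((hw x (hRR2.trans hx)).continuousAt.sub
      (continuousAt_const.mul hbc)).continuousWithinAt
  have hmain : ∀ x, R2 ≤ ‖x‖ → h x ≤ 0 := by
    by_contra! hcon
    obtain ⟨y, hy, hτ⟩ := hcon
    obtain ⟨S, hS⟩ := hlim (h y / 2) (by linarith)
    set T := max S (‖y‖ + 1) with hT
    set Q : Set (EuclideanSpace ℝ (Fin n)) := {x | R2 ≤ ‖x‖} ∩ Metric.closedBall 0 T with hQ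
    have hQc : IsCompact Q :=
      (isCompact_closedBall _ _).inter_left (isClosed_le continuous_const continuous_norm)
    have hyQ : y ∈ Q := ⟨hy, by
      rw [mem_closedBall_zero_iff]
      exact (by linarith : ‖y‖ ≤ ‖y‖ + 1).trans (le_max_right _ _)⟩
    obtain ⟨z, hzQ, hz⟩ := hQc.exists_isMaxOn ⟨y, hyQ⟩ (hcont.mono Set.inter_subset_left)
    have hzy : h y ≤ h z := hz hyQ
    have hzR : R2 ≤ ‖z‖ := hzQ.1
    have hzT : ‖z‖ ≤ T := mem_closedBall_zero_iff.1 hzQ.2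
    have hqz := hq4 z hzR
    have hne1 : ‖z‖ ≠ R2 := by
      intro hzz
      have h1 : w z ≤ 1 := (le_abs_self _).trans (hS1 z (hSR2.trans hzR))
      have h2 : qf B z ≤ c2 * R2 ^ 2 := by
        have := hq2 z
        rwa [← norm_sq_eq_sum, hzz] at this
      have h3 : (c2 * R2 ^ 2) ^ e ≤ qf B z ^ e :=
        Real.rpow_le_rpow_of_nonpos (by linarith) h2 he0.le
      have h4 := barF_lower (n := n) hqz
      have h5 : N0 * ((c2 * R2 ^ 2) ^ e / 2) = 1 := by
        rw [hN0, Real.rpow_neg (by positivity)]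
        have : 0 < (c2 * R2 ^ 2) ^ e := by positivity
        field_simp
      have h6 : 1 ≤ N0 * barF n (qf B z) := by
        rw [← h5]
        refine mul_le_mul_of_nonneg_left ?_ hN00.le
        linarith
      have : h z ≤ 0 := by simp only [hh]; linarith
      linarith
    have hne2 : ‖z‖ < T := by
      rcases lt_or_ge ‖z‖ T with h1 | h1
      · exact h1
      · have h2 := (le_abs_self _).trans (hS z ((le_max_left _ _).trans h1))
        have h3 := hbpos z hzR
        have : h z ≤ h y / 2 := by simp only [hh]; simp only [hh] at h2; linarith
        linarith
    have hzR' : R2 < ‖z‖ := lt_of_le_of_ne hzR (Ne.symm hne1)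
    have hmax : IsLocalMax h z := by
      have o : IsOpen {x : EuclideanSpace ℝ (Fin n) | R2 < ‖x‖ ∧ ‖x‖ < T} :=
        (isOpen_lt continuous_const continuous_norm).inter
          (isOpen_lt continuous_norm continuous_const)
      filter_upwards [o.mem_nhds ⟨hzR', hne2⟩] with x hx
      exact hz ⟨hx.1.le, mem_closedBall_zero_iff.2 hx.2.le⟩
    have hz0 : 0 < ‖z‖ := hR20.trans hzR'
    refine no_interior_max w B (b z) lam N0 z hlam hN00 hBs (hb z) (hw z (hRR2.trans hzR))
      (heq z (hRR2.trans hzR)) (by linarith) ?_ hmax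
    refine barrier_neg hn A B (b z) lam β (K * ‖z‖ ^ (-(1 + σ))) hlam (by positivity) z hAB (hqq z)
      (hlow z) hβ (hbA z (hRR2.trans hzR)) (by linarith) ?_
    refine lt_of_le_of_lt ?_ (hS2 ‖z‖ (hS2R2.trans hzR))
    have h1 : √(qf B z) ≤ √c2 * ‖z‖ := by
      rw [← Real.sqrt_sq hz0.le, ← Real.sqrt_mul hc2.le, norm_sq_eq_sum]
      exact Real.sqrt_le_sqrt (hq2 z)
    have h2 : ‖z‖ ^ (-σ) = ‖z‖ ^ (-(1 + σ)) * ‖z‖ := by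
      rw [← Real.rpow_add_one hz0.ne']
      congr 1
      ring
    rw [h2]
    calc K * ‖z‖ ^ (-(1 + σ)) * √(qf B z) * (n ^ 3 * (8 / lam + 2 * β)) ≤
          K * ‖z‖ ^ (-(1 + σ)) * (√c2 * ‖z‖) * (n ^ 3 * (8 / lam + 2 * β)) := by gcongr
      _ = _ := by ring
  refine ⟨R2, hRR2, N0 * c1 ^ e, by positivity, fun x hx => ?_⟩
  have hx0 : 0 < ‖x‖ := hR20.trans_le hx
  have h1 := hmain x hx
  have h2 : barF n (qf B x) ≤ qf B x ^ e := barF_le (by linarith [hq4 x hx])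
  have h3 : qf B x ^ e ≤ (c1 * ‖x‖ ^ 2) ^ e := by
    refine Real.rpow_le_rpow_of_nonpos (by positivity) ?_ he0.le
    rw [norm_sq_eq_sum]
    exact hq1 x
  have h4 : (c1 * ‖x‖ ^ 2) ^ e = c1 ^ e * ‖x‖ ^ (-((n : ℝ) - 2)) := by
    rw [Real.mul_rpow hc1.le (by positivity), ← Real.rpow_natCast, ← Real.rpow_mul hx0.le]
    congr 2
    rw [he]
    push_cast
    ring
  rw [h4] at h3
  have h5 := mul_le_mul_of_nonneg_left (h2.trans h3) hN00.le
  simp only [hh] at h1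
  linarith

/-! ### Existence of the limit at infinity -/

lemma radial_osc {n : ℕ} (v : EuclideanSpace ℝ (Fin n) → ℝ) (R C σ : ℝ) (hR : 0 < R)
    (hσ : 0 < σ) (hv : ∀ x, R ≤ ‖x‖ → DifferentiableAt ℝ v x)
    (hd : ∀ x, R ≤ ‖x‖ → ‖fderiv ℝ v x‖ ≤ C * ‖x‖ ^ (-(1 + σ)))
    (hC : 0 ≤ C) (x : EuclideanSpace ℝ (Fin n)) (hx : R ≤ ‖x‖) (T : ℝ) (hT : 1 ≤ T) :
    |v (T • x) - v x| ≤ C / σ * ‖x‖ ^ (-σ) := by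
  have hx0 : 0 < ‖x‖ := hR.trans_le hx
  have hxt : ∀ t : ℝ, 1 ≤ t → R ≤ ‖t • x‖ := by
    intro t ht
    rw [norm_smul, Real.norm_of_nonneg (by linarith)]
    nlinarith
  have hder : ∀ t : ℝ, 1 ≤ t →
      HasDerivAt (fun t : ℝ => v (t • x) - v x) (fderiv ℝ v (t • x) x) t := by
    intro t ht
    have h1 : HasDerivAt (fun t : ℝ => t • x) x t := by
      simpa using (hasDerivAt_id t).smul_const x
    exact ((hv _ (hxt t ht)).hasFDerivAt.comp_hasDerivAt t h1).sub_const _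
  have hB : ∀ t : ℝ, 1 ≤ t → HasDerivAt (fun t : ℝ => C / σ * ‖x‖ ^ (-σ) * (1 - t ^ (-σ)))
      (C * ‖x‖ ^ (-σ) * t ^ (-σ - 1)) t := by
    intro t ht
    have h1 := ((Real.hasDerivAt_rpow_const (p := -σ) (Or.inl (by linarith : t ≠ 0))).const_sub
      1).const_mul (C / σ * ‖x‖ ^ (-σ))
    refine h1.congr_deriv ?_
    field_simp
  have key := image_norm_le_of_norm_deriv_right_le_deriv_boundary' (a := 1) (b := T)
    (f := fun t : ℝ => v (t • x) - v x) (f' := fun t => fderiv ℝ v (t • x) x)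
    (B := fun t : ℝ => C / σ * ‖x‖ ^ (-σ) * (1 - t ^ (-σ)))
    (B' := fun t => C * ‖x‖ ^ (-σ) * t ^ (-σ - 1))
    (fun t ht => (hder t ht.1).continuousAt.continuousWithinAt)
    (fun t ht => (hder t ht.1).hasDerivWithinAt) (by simp)
    (fun t ht => (hB t ht.1).continuousAt.continuousWithinAt)
    (fun t ht => (hB t ht.1).hasDerivWithinAt)
    (fun t ht => by
      have ht0 : 0 < t := by linarith [ht.1]
      have h1 := (fderiv ℝ v (t • x)).le_of_opNorm_le (hd _ (hxt t ht.1)) x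
      refine h1.trans_eq ?_
      rw [norm_smul, Real.norm_of_nonneg ht0.le, Real.mul_rpow ht0.le hx0.le,
        show -(1 + σ) = -σ - 1 by ring, Real.rpow_sub_one hx0.ne']
      field_simp)
    (Set.right_mem_Icc.2 hT)
  refine key.trans ?_
  have h2 : 0 ≤ T ^ (-σ) := Real.rpow_nonneg (by linarith) _
  have h3 : 0 ≤ C / σ * ‖x‖ ^ (-σ) := by positivity
  nlinarith

/-- Points of equal norm in a common half-space are joined by a segment staying away from
the origin. -/
lemma chord_osc {n : ℕ} (v : EuclideanSpace ℝ (Fin n) → ℝ) (R C σ ρ : ℝ) (hR : 0 < R)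
    (hσ : 0 < σ) (hv : ∀ x, R ≤ ‖x‖ → DifferentiableAt ℝ v x)
    (hd : ∀ x, R ≤ ‖x‖ → ‖fderiv ℝ v x‖ ≤ C * ‖x‖ ^ (-(1 + σ)))
    (hC : 0 ≤ C) (hρ : 2 * R ≤ ρ) (x y : EuclideanSpace ℝ (Fin n)) (hx : ‖x‖ = ρ) (hy : ‖y‖ = ρ)
    (hxy : 0 ≤ ⟪x, y⟫) : |v x - v y| ≤ 4 * C * (ρ / 2) ^ (-σ) := by
  have hρ0 : 0 < ρ := by linarith
  have hseg : ∀ z ∈ segment ℝ x y, ρ / 2 ≤ ‖z‖ := by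
    rintro z ⟨s, t, hs, ht, hst, rfl⟩
    have h1 : ‖s • x + t • y‖ ^ 2 = s ^ 2 * ρ ^ 2 + 2 * (s * t * ⟪x, y⟫) + t ^ 2 * ρ ^ 2 := by
      rw [norm_add_sq_real, norm_smul, norm_smul, inner_smul_left, inner_smul_right,
        Real.norm_of_nonneg hs, Real.norm_of_nonneg ht, hx, hy]
      simp
      ring
    have h2 : 0 ≤ s * t * ⟪x, y⟫ := by positivity
    have h3 : 1 / 2 ≤ s ^ 2 + t ^ 2 := by nlinarith [sq_nonneg (s - t)]
    have h4 : (ρ / 2) ^ 2 ≤ ‖s • x + t • y‖ ^ 2 := by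
      rw [h1]
      nlinarith [mul_le_mul_of_nonneg_right h3 (sq_nonneg ρ)]
    exact (sq_le_sq₀ (by positivity) (norm_nonneg _)).1 h4
  have h5 := Convex.norm_image_sub_le_of_norm_fderiv_le (𝕜 := ℝ) (f := v) (s := segment ℝ x y)
    (C := C * (ρ / 2) ^ (-(1 + σ))) (fun z hz => hv z (by linarith [hseg z hz]))
    (fun z hz => (hd z (by linarith [hseg z hz])).trans (by
      refine mul_le_mul_of_nonneg_left ?_ hC
      exact Real.rpow_le_rpow_of_nonpos (by linarith) (hseg z hz) (by linarith)))
    (convex_segment x y) (right_mem_segment ℝ x y) (left_mem_segment ℝ x y)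
  have h6 : ‖x - y‖ ≤ 2 * ρ := (norm_sub_le x y).trans (by rw [hx, hy]; linarith)
  have h7 : C * (ρ / 2) ^ (-(1 + σ)) * (2 * ρ) = 4 * C * (ρ / 2) ^ (-σ) := by
    rw [show -(1 + σ) = -σ - 1 by ring, Real.rpow_sub_one (by positivity)]
    field_simp
    ring
  rw [← h7, ← Real.norm_eq_abs]
  exact h5.trans (mul_le_mul_of_nonneg_left h6 (by positivity))

lemma exists_orthogonal {n : ℕ} (hn : 2 ≤ n) (x y : EuclideanSpace ℝ (Fin n)) :
    ∃ z : EuclideanSpace ℝ (Fin n), ‖z‖ = ‖x‖ ∧ ⟪x, z⟫ = 0 ∧ 0 ≤ ⟪z, y⟫ := by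
  rcases eq_or_ne x 0 with rfl | hx
  · exact ⟨0, by simp⟩
  obtain ⟨m, rfl⟩ : ∃ m, n = m + 1 := ⟨n - 1, by omega⟩
  have : Fact (Module.finrank ℝ (EuclideanSpace ℝ (Fin (m + 1))) = m + 1) := ⟨by simp⟩
  have h1 := Submodule.finrank_orthogonal_span_singleton (𝕜 := ℝ) (n := m) hx
  have h2 : (Submodule.span ℝ {x})ᗮ ≠ ⊥ := Submodule.one_le_finrank_iff.1 (by omega)
  obtain ⟨u, hu, hu0⟩ := (Submodule.ne_bot_iff _).1 h2
  have h3 : ⟪x, u⟫ = 0 := Submodule.mem_orthogonal_singleton_iff_inner_right.1 hu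
  have hun : ‖u‖ ≠ 0 := norm_ne_zero_iff.2 hu0
  rcases le_total 0 ⟪u, y⟫ with h4 | h4
  · refine ⟨(‖x‖ / ‖u‖) • u, ?_, ?_, ?_⟩
    · rw [norm_smul, norm_div, norm_norm, norm_norm, div_mul_cancel₀ _ hun]
    · rw [inner_smul_right, h3, mul_zero]
    · rw [real_inner_smul_left]
      positivity
  · refine ⟨(-(‖x‖ / ‖u‖)) • u, ?_, ?_, ?_⟩
    · rw [norm_smul, norm_neg, norm_div, norm_norm, norm_norm, div_mul_cancel₀ _ hun]
    · rw [inner_smul_right, h3, mul_zero]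
    · rw [real_inner_smul_left]
      exact mul_nonneg_of_nonpos_of_nonpos (by simp; positivity) h4

lemma exists_limit {n : ℕ} (hn : 2 ≤ n) (v : EuclideanSpace ℝ (Fin n) → ℝ) (R C σ : ℝ)
    (hR : 0 < R) (hσ : 0 < σ) (hv : ∀ x, R ≤ ‖x‖ → DifferentiableAt ℝ v x)
    (hd : ∀ x, R ≤ ‖x‖ → ‖fderiv ℝ v x‖ ≤ C * ‖x‖ ^ (-(1 + σ))) (hC : 0 ≤ C) :
    ∃ c : ℝ, ∀ ε > 0, ∃ S, ∀ x, S ≤ ‖x‖ → |v x - c| ≤ ε := by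
  -- the oscillation of `v` outside a large ball, through radial projection onto the sphere
  have hosc : ∀ ρ, 2 * R ≤ ρ → ∀ x y : EuclideanSpace ℝ (Fin n), ρ ≤ ‖x‖ → ρ ≤ ‖y‖ →
      |v x - v y| ≤ 2 * (C / σ * ρ ^ (-σ)) + 2 * (4 * C * (ρ / 2) ^ (-σ)) := by
    intro ρ hρ x y hx hy
    have hρ0 : 0 < ρ := by linarith
    have hproj : ∀ x : EuclideanSpace ℝ (Fin n), ρ ≤ ‖x‖ → ∃ x', ‖x'‖ = ρ ∧
        |v x - v x'| ≤ C / σ * ρ ^ (-σ) := by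
      intro x hx
      have hx0 : 0 < ‖x‖ := hρ0.trans_le hx
      have hn' : ‖(ρ / ‖x‖) • x‖ = ρ := by
        rw [norm_smul, norm_div, norm_norm, div_mul_cancel₀ _ hx0.ne', Real.norm_of_nonneg hρ0.le]
      refine ⟨(ρ / ‖x‖) • x, hn', ?_⟩
      have := radial_osc v R C σ hR hσ hv hd hC ((ρ / ‖x‖) • x) (by rw [hn']; linarith)
        (‖x‖ / ρ) ((one_le_div hρ0).2 hx)
      rw [smul_smul, hn', div_mul_div_cancel₀ hρ0.ne', div_self hx0.ne', one_smul] at this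
      exact this
    obtain ⟨x', hx', hx2⟩ := hproj x hx
    obtain ⟨y', hy', hy2⟩ := hproj y hy
    obtain ⟨z, hz, hxz, hzy⟩ := exists_orthogonal hn x' y'
    have h1 := chord_osc v R C σ ρ hR hσ hv hd hC hρ x' z hx' (hz.trans hx') hxz.ge
    have h2 := chord_osc v R C σ ρ hR hσ hv hd hC hρ z y' (hz.trans hx') hy' hzy
    rw [abs_le] at *
    constructor <;> linarith [hx2.1, hx2.2, hy2.1, hy2.2, h1.1, h1.2, h2.1, h2.2]
  have hsmall : ∀ ε > 0, ∃ S, ∀ x y : EuclideanSpace ℝ (Fin n), S ≤ ‖x‖ → S ≤ ‖y‖ →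
      |v x - v y| ≤ ε := by
    intro ε hε
    obtain ⟨S1, hS10, hS1⟩ := exists_norm_rpow_le (2 * (C / σ)) σ (ε / 2) hσ (by linarith)
    obtain ⟨S2, hS20, hS2⟩ := exists_norm_rpow_le (8 * C) σ (ε / 2) hσ (by linarith)
    set ρ := max (2 * R) (max S1 (2 * S2)) with hρ
    have a1 : 2 * R ≤ ρ := le_max_left _ _
    have a2 : S1 ≤ ρ := (le_max_left _ _).trans (le_max_right _ _)
    have a3 : 2 * S2 ≤ ρ := (le_max_right _ _).trans (le_max_right _ _)
    refine ⟨ρ, fun x y hx hy => (hosc ρ a1 x y hx hy).trans ?_⟩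
    have b1 := hS1 ρ a2
    have b2 := hS2 (ρ / 2) (by linarith)
    linarith
  have : Nonempty (Fin n) := ⟨⟨0, by omega⟩⟩
  set e : EuclideanSpace ℝ (Fin n) := EuclideanSpace.single ⟨0, by omega⟩ 1 with he
  have hen : ‖e‖ = 1 := by simp [he]
  have hke : ∀ k : ℕ, ‖(k : ℝ) • e‖ = k := fun k => by simp [norm_smul, hen]
  have hcau : CauchySeq fun k : ℕ => v ((k : ℝ) • e) := by
    rw [Metric.cauchySeq_iff']
    intro ε hε
    obtain ⟨S, hS⟩ := hsmall (ε / 2) (by linarith)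
    obtain ⟨N, hN⟩ := exists_nat_ge S
    refine ⟨N, fun k hk => ?_⟩
    have hk' : (N : ℝ) ≤ k := by exact_mod_cast hk
    rw [Real.dist_eq]
    have := hS ((k : ℝ) • e) ((N : ℝ) • e) (by rw [hke]; linarith) (by rw [hke]; exact hN)
    linarith
  obtain ⟨c, hc⟩ := cauchySeq_tendsto_of_complete hcau
  refine ⟨c, fun ε hε => ?_⟩
  obtain ⟨S, hS⟩ := hsmall ε hε
  refine ⟨S, fun x hx => ?_⟩
  refine le_of_tendsto ((tendsto_const_nhds.sub hc).abs) ?_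
  obtain ⟨N, hN⟩ := exists_nat_ge S
  filter_upwards [eventually_ge_atTop N] with k hk
  have hk' : (N : ℝ) ≤ k := by exact_mod_cast hk
  exact hS _ _ hx (by rw [hke]; linarith)

/-! ### Decay of the gradient -/

lemma grad_decay {n : ℕ} (hn : 3 ≤ n) (w : EuclideanSpace ℝ (Fin n) → ℝ)
    (b : EuclideanSpace ℝ (Fin n) → Fin n → Fin n → ℝ) (R N C σ L lam Lam : ℝ)
    (hN : 0 < N) (hC : 0 ≤ C) (hσ : 0 < σ) (hL : 0 ≤ L) (hlam : 0 < lam) (hLam : lam ≤ Lam)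
    (hw : ∀ x, R ≤ ‖x‖ → ContDiffAt ℝ 2 w x)
    (hb1 : ∀ x v, lam * ∑ i, v i ^ 2 ≤ qf (b x) v)
    (hb2 : ∀ x v, qf (b x) v ≤ Lam * ∑ i, v i ^ 2)
    (heq : ∀ x, R ≤ ‖x‖ → tp (b x) (hess w x) = 0)
    (hwN : ∀ x, R ≤ ‖x‖ → |w x| ≤ N * ‖x‖ ^ (-((n : ℝ) - 2)))
    (hwG : ∀ x, R ≤ ‖x‖ → ‖fderiv ℝ w x‖ ≤ C * ‖x‖ ^ (-(1 + σ)))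
    (hLip : ∀ x, R ≤ ‖x‖ → ∀ y, R ≤ ‖y‖ → ∀ i j,
      |b x i j - b y i j| ≤ L * ‖fderiv ℝ w x - fderiv ℝ w y‖) :
    ∃ R' ≥ R, ∃ C₀ > 0, ∀ x, R' ≤ ‖x‖ → ‖fderiv ℝ w x‖ ≤ C₀ * ‖x‖ ^ (-(n : ℝ) + 1) := by
  have hn3 : (3 : ℝ) ≤ n := by exact_mod_cast hn
  have hLam0 : 0 < Lam := hlam.trans_le hLam
  set η : ℝ := (lam ^ 2 / (2 * n ^ 2 * Lam)) ^ 2 with hη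
  have hη0 : 0 < η := by positivity
  set ρ := max 1 (max R (32 * L ^ 2 * N * C / η)) with hρ
  have hρ1 : 1 ≤ ρ := le_max_left _ _
  have hρR : R ≤ ρ := (le_max_left _ _).trans (le_max_right _ _)
  have hρS : 32 * L ^ 2 * N * C / η ≤ ρ := (le_max_right _ _).trans (le_max_right _ _)
  set M : ℝ := 8 * n * Lam / lam + 17 with hM
  have hM0 : 0 < M := by positivity
  refine ⟨2 * ρ, by linarith, M * N * (1 / 2) ^ (-(n : ℝ) + 1), by positivity, fun x0 hx0 => ?_⟩
  set r := ‖x0‖ / 2 with hr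
  have hrρ : ρ ≤ r := by rw [hr]; linarith
  have hr1 : 1 ≤ r := hρ1.trans hrρ
  have hr0 : 0 < r := by linarith
  have hball : ∀ x ∈ Metric.closedBall x0 r, r ≤ ‖x‖ := by
    intro x hx
    rw [mem_closedBall_iff_norm'] at hx
    have h1 := norm_sub_norm_le x0 x
    have h2 : ‖x0‖ = 2 * r := by rw [hr]; ring
    linarith
  have hR : ∀ x ∈ Metric.closedBall x0 r, R ≤ ‖x‖ := fun x hx => by linarith [hball x hx]
  have hsmall : 32 * L ^ 2 * (N * r ^ (-((n : ℝ) - 2))) * (C * r ^ (-(1 + σ))) ≤ η * r := by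
    have h1 : r ^ (-((n : ℝ) - 2)) ≤ 1 := Real.rpow_le_one_of_one_le_of_nonpos hr1 (by linarith)
    have h2 : r ^ (-(1 + σ)) ≤ 1 := Real.rpow_le_one_of_one_le_of_nonpos hr1 (by linarith)
    have h3 : 32 * L ^ 2 * N * C ≤ η * r := by
      have := (div_le_iff₀ hη0).1 (hρS.trans hrρ)
      linarith
    calc 32 * L ^ 2 * (N * r ^ (-((n : ℝ) - 2))) * (C * r ^ (-(1 + σ))) ≤
          32 * L ^ 2 * (N * 1) * (C * 1) := by gcongr
      _ = 32 * L ^ 2 * N * C := by ring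
      _ ≤ _ := h3
  have key := grad_est (by omega) w b x0 r (N * r ^ (-((n : ℝ) - 2))) (C * r ^ (-(1 + σ))) L lam
    Lam hr0 (by positivity) hL hlam hLam (fun x hx => hw x (hR x hx)) hb1 hb2
    (fun x hx => heq x (hR x hx))
    (fun x hx => (hwN x (hR x hx)).trans (mul_le_mul_of_nonneg_left
      (Real.rpow_le_rpow_of_nonpos hr0 (hball x hx) (by linarith)) hN.le))
    (fun x hx => (hwG x (hR x hx)).trans (mul_le_mul_of_nonneg_left
      (Real.rpow_le_rpow_of_nonpos hr0 (hball x hx) (by linarith)) hC))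
    (fun x hx y hy => hLip x (hR x hx) y (hR y hy)) hsmall
  refine key.trans_eq ?_
  have h4 : (1 / 2 : ℝ) ^ (-(n : ℝ) + 1) * ‖x0‖ ^ (-(n : ℝ) + 1) = r ^ (-((n : ℝ) - 2)) / r := by
    rw [← Real.mul_rpow (by norm_num) (norm_nonneg _), ← Real.rpow_sub_one hr0.ne', hr]
    congr 1 <;> ring
  rw [mul_assoc (M * N), h4, ← hM]
  ring

/-- Finitely many locally Lipschitz functions share a ball and a constant. -/
lemma exists_common_lipschitz {n : ℕ} (a : Fin n → Fin n → EuclideanSpace ℝ (Fin n) → ℝ)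
    (ha : ∀ i j, LocallyLipschitz (a i j)) (u : EuclideanSpace ℝ (Fin n)) :
    ∃ L ≥ 0, ∃ δ > 0, ∀ p q, ‖p - u‖ < δ → ‖q - u‖ < δ → ∀ i j,
      |a i j p - a i j q| ≤ L * ‖p - q‖ := by
  choose K t ht hK using fun i j => ha i j u
  have h1 : (⋂ i, ⋂ j, t i j) ∈ 𝓝 u :=
    Filter.iInter_mem.2 fun i => Filter.iInter_mem.2 fun j => ht i j
  obtain ⟨δ, hδ, hsub⟩ := Metric.mem_nhds_iff.1 h1
  refine ⟨∑ i, ∑ j, (K i j : ℝ), by positivity, δ, hδ, fun p q hp hq i j => ?_⟩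
  have hp' := Set.mem_iInter₂.1 (hsub (mem_ball_iff_norm.2 hp)) i j
  have hq' := Set.mem_iInter₂.1 (hsub (mem_ball_iff_norm.2 hq)) i j
  have h2 := (hK i j).dist_le_mul p hp' q hq'
  rw [Real.dist_eq, dist_eq_norm] at h2
  refine h2.trans (mul_le_mul_of_nonneg_right ?_ (norm_nonneg _))
  have h3 : (K i j : ℝ) ≤ ∑ j, (K i j : ℝ) :=
    Finset.single_le_sum (f := fun j => (K i j : ℝ)) (fun _ _ => NNReal.coe_nonneg _)
      (Finset.mem_univ j)
  have h4 : ∑ j, (K i j : ℝ) ≤ ∑ i, ∑ j, (K i j : ℝ) :=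
    Finset.single_le_sum (f := fun i => ∑ j, (K i j : ℝ))
      (fun _ _ => Finset.sum_nonneg fun _ _ => NNReal.coe_nonneg _) (Finset.mem_univ i)
  exact h3.trans h4

lemma fderiv_perturb {n : ℕ} {φ : EuclideanSpace ℝ (Fin n) → ℝ} (u : EuclideanSpace ℝ (Fin n))
    (c : ℝ) {x : EuclideanSpace ℝ (Fin n)} (h : DifferentiableAt ℝ φ x) :
    fderiv ℝ (fun y => φ y - ⟪u, y⟫ - c) x =
      InnerProductSpace.toDual ℝ (EuclideanSpace ℝ (Fin n)) (gradient φ x - u) := by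
  have h1 : HasFDerivAt (fun y : EuclideanSpace ℝ (Fin n) => ⟪u, y⟫)
      (InnerProductSpace.toDual ℝ (EuclideanSpace ℝ (Fin n)) u) x :=
    (InnerProductSpace.toDual ℝ (EuclideanSpace ℝ (Fin n)) u).hasFDerivAt
  rw [map_sub, gradient, LinearIsometryEquiv.apply_symm_apply]
  exact ((h.hasFDerivAt.sub h1).sub_const c).fderiv

/-- Subtracting an affine function does not change second derivatives. -/
lemma pdd_eq_hess {n : ℕ} {φ : EuclideanSpace ℝ (Fin n) → ℝ} (u : EuclideanSpace ℝ (Fin n))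
    (c : ℝ) {x : EuclideanSpace ℝ (Fin n)} (h : ContDiffAt ℝ 2 φ x)
    (hw : ContDiffAt ℝ 2 (fun y => φ y - ⟪u, y⟫ - c) x) (i j : Fin n) :
    pdd φ i j x = hess (fun y => φ y - ⟪u, y⟫ - c) x i j := by
  have h1 : (fun y => gradient φ y j) =ᶠ[𝓝 x] fun y =>
      fderiv ℝ (fun y => φ y - ⟪u, y⟫ - c) y (EuclideanSpace.single j 1) + u j := by
    filter_upwards [h.eventually (by simp)] with y hy
    rw [fderiv_perturb u c (hy.differentiableAt (by norm_num)), InnerProductSpace.toDual_apply_apply,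
      EuclideanSpace.inner_single_right]
    simp
  have h2 : DifferentiableAt ℝ (fderiv ℝ (fun y => φ y - ⟪u, y⟫ - c)) x :=
    (hw.fderiv_right (m := 1) (by norm_num)).differentiableAt (by norm_num)
  have h3 := (h2.hasFDerivAt.clm_apply
    (hasFDerivAt_const (EuclideanSpace.single j (1 : ℝ)) x)).add_const (u j)
  rw [pdd, h1.fderiv_eq, h3.fderiv]
  simp [hess]

end

/-- **Airfoil far field flow (compressible):** if `φ` solves the quasilinear
uniformly elliptic equation `∑ aᵢⱼ(∇φ) ∂ᵢⱼφ = 0` in the exterior domain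
`{|x| ≥ R}` and `|∇φ - u∞| ≤ C |x|^(-1-σ)`, then in fact
`|∇φ - u∞| ≤ C₀ |x|^(-n+1)` on `{|x| ≥ R'}` for some `R' ≥ R`. -/
theorem stmt0 (n : ℕ) (hn : 3 ≤ n) (R : ℝ) (hR : 0 < R)
    (a : Fin n → Fin n → EuclideanSpace ℝ (Fin n) → ℝ)
    (ha_symm : ∀ p i j, a i j p = a j i p)
    (ha_lip : ∀ i j, LocallyLipschitz (a i j))
    (lam Lam : ℝ) (hlam : 0 < lam) (hlamLam : lam ≤ Lam)
    (ha_ell : ∀ p ξ : EuclideanSpace ℝ (Fin n),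
      lam * ‖ξ‖ ^ 2 ≤ ∑ i, ∑ j, a i j p * ξ i * ξ j ∧
      ∑ i, ∑ j, a i j p * ξ i * ξ j ≤ Lam * ‖ξ‖ ^ 2)
    (φ : EuclideanSpace ℝ (Fin n) → ℝ)
    (hφ : ContDiffOn ℝ 2 φ {x | R ≤ ‖x‖})
    (heq : ∀ x : EuclideanSpace ℝ (Fin n), R ≤ ‖x‖ →
      ∑ i, ∑ j, a i j (gradient φ x) * pdd φ i j x = 0)
    (uinf : EuclideanSpace ℝ (Fin n)) (C σ : ℝ) (hC : 0 < C) (hσ : 0 < σ)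
    (hdecay : ∀ x : EuclideanSpace ℝ (Fin n), R ≤ ‖x‖ →
      ‖gradient φ x - uinf‖ ≤ C * ‖x‖ ^ (-(1 + σ))) :
    ∃ R' ≥ R, ∃ C₀ > 0, ∀ x : EuclideanSpace ℝ (Fin n), R' ≤ ‖x‖ →
      ‖gradient φ x - uinf‖ ≤ C₀ * ‖x‖ ^ (-(n : ℝ) + 1) := by
  obtain ⟨L, hL, δ, hδ, hLδ⟩ := exists_common_lipschitz a ha_lip uinf
  obtain ⟨S, hS0, hS⟩ := exists_norm_rpow_le C (1 + σ) δ (by linarith) hδ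
  -- outside this ball `φ` is `C²` on an open set and `∇φ` lies in the Lipschitz ball
  set R1 := max (R + 1) S with hR1
  have hRR1 : R + 1 ≤ R1 := le_max_left _ _
  have hSR1 : S ≤ R1 := le_max_right _ _
  have hR10 : 0 < R1 := by linarith
  have hφ2 : ∀ x, R1 ≤ ‖x‖ → ContDiffAt ℝ 2 φ x := by
    intro x hx
    refine hφ.contDiffAt ?_
    have o : IsOpen {x : EuclideanSpace ℝ (Fin n) | R < ‖x‖} :=
      isOpen_lt continuous_const continuous_norm
    refine Filter.mem_of_superset (o.mem_nhds (show R < ‖x‖ by linarith)) fun y hy => ?_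
    exact le_of_lt (show R < ‖y‖ from hy)
  have hp : ∀ x, R1 ≤ ‖x‖ → ‖gradient φ x - uinf‖ < δ := fun x hx =>
    (hdecay x (by linarith)).trans_lt (hS _ (hSR1.trans hx))
  have hwc : ∀ c x, R1 ≤ ‖x‖ → ContDiffAt ℝ 2 (fun y => φ y - inner ℝ uinf y - c) x :=
    fun c x hx => ((hφ2 x hx).sub (contDiffAt_const.inner ℝ contDiffAt_id)).sub contDiffAt_const
  have hfd : ∀ c x, R1 ≤ ‖x‖ → fderiv ℝ (fun y => φ y - inner ℝ uinf y - c) x =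
      InnerProductSpace.toDual ℝ (EuclideanSpace ℝ (Fin n)) (gradient φ x - uinf) :=
    fun c x hx => fderiv_perturb uinf c ((hφ2 x hx).differentiableAt (by norm_num))
  have hfn : ∀ c x, R1 ≤ ‖x‖ → ‖fderiv ℝ (fun y => φ y - inner ℝ uinf y - c) x‖ =
      ‖gradient φ x - uinf‖ := fun c x hx => by
    rw [hfd c x hx, LinearIsometryEquiv.norm_map]
  obtain ⟨c, hc⟩ := exists_limit (by omega) (fun y => φ y - inner ℝ uinf y - 0) R1 C σ hR10 hσ
    (fun x hx => (hwc 0 x hx).differentiableAt (by norm_num))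
    (fun x hx => by rw [hfn 0 x hx]; exact hdecay x (by linarith)) hC.le
  set w : EuclideanSpace ℝ (Fin n) → ℝ := fun y => φ y - inner ℝ uinf y - c with hw
  set b : EuclideanSpace ℝ (Fin n) → Fin n → Fin n → ℝ :=
    fun x i j => a i j (gradient φ x) with hb
  set A : Fin n → Fin n → ℝ := fun i j => a i j uinf with hA
  have hlow : ∀ (p : EuclideanSpace ℝ (Fin n)) (v : Fin n → ℝ),
      lam * ∑ i, v i ^ 2 ≤ qf (fun i j => a i j p) v := by
    intro p v
    have := (ha_ell p (WithLp.toLp 2 v)).1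
    rw [norm_sq_eq_sum] at this
    exact this
  have hupp : ∀ (p : EuclideanSpace ℝ (Fin n)) (v : Fin n → ℝ),
      qf (fun i j => a i j p) v ≤ Lam * ∑ i, v i ^ 2 := by
    intro p v
    have := (ha_ell p (WithLp.toLp 2 v)).2
    rw [norm_sq_eq_sum] at this
    exact this
  have hlim : ∀ ε > 0, ∃ S, ∀ x, S ≤ ‖x‖ → |w x| ≤ ε := by
    intro ε hε
    obtain ⟨S, hS⟩ := hc ε hε
    refine ⟨S, fun x hx => ?_⟩
    have := hS x hx
    rwa [sub_zero] at this
  have hweq : ∀ x, R1 ≤ ‖x‖ → tp (b x) (hess w x) = 0 := by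
    intro x hx
    rw [← heq x (by linarith)]
    simp only [tp, hb]
    refine Finset.sum_congr rfl fun i _ => Finset.sum_congr rfl fun j _ => ?_
    rw [pdd_eq_hess uinf c (hφ2 x hx) (hwc c x hx)]
  have hbA : ∀ x, R1 ≤ ‖x‖ → ∀ i j, |b x i j - A i j| ≤ L * C * ‖x‖ ^ (-(1 + σ)) := by
    intro x hx i j
    refine (hLδ _ _ (hp x hx) (by simpa using hδ) i j).trans ?_
    rw [mul_assoc]
    exact mul_le_mul_of_nonneg_left (hdecay x (by linarith)) hL
  have hLC : 0 ≤ L * C := mul_nonneg hL hC.le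
  obtain ⟨R2, hR2, N1, hN1, hb1⟩ := comparison hn w b A lam (L * C) σ R1 hlam hLC hσ hR10
    (fun i j => ha_symm uinf i j) (hlow uinf) (fun x => hlow _) (hwc c) hweq hbA hlim
  obtain ⟨R3, hR3, N2, hN2, hb2⟩ := comparison hn (fun x => -w x) b A lam (L * C) σ R1 hlam hLC
    hσ hR10 (fun i j => ha_symm uinf i j) (hlow uinf) (fun x => hlow _)
    (fun x hx => (hwc c x hx).neg) (fun x hx => by rw [tp_hess_neg, hweq x hx, neg_zero]) hbA
    (fun ε hε => by simpa only [abs_neg] using hlim ε hε)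
  have hR4 : R1 ≤ max R2 R3 := le_trans hR2 (le_max_left _ _)
  obtain ⟨R', hR', C₀, hC₀, hfin⟩ := grad_decay hn w b (max R2 R3) (N1 + N2) C σ L lam Lam
    (by positivity) hC.le hσ hL hlam hlamLam (fun x hx => hwc c x (hR4.trans hx))
    (fun x => hlow _) (fun x => hupp _) (fun x hx => hweq x (hR4.trans hx))
    (fun x hx => by
      have h1 := hb1 x ((le_max_left _ _).trans hx)
      have h2 := hb2 x ((le_max_right _ _).trans hx)
      have h3 : 0 ≤ ‖x‖ ^ (-((n : ℝ) - 2)) := Real.rpow_nonneg (norm_nonneg _) _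
      have h4 := mul_nonneg hN1.le h3
      have h5 := mul_nonneg hN2.le h3
      rw [abs_le]
      constructor <;> linarith)
    (fun x hx => by rw [hfn c x (hR4.trans hx)]; exact hdecay x (by linarith))
    (fun x hx y hy i j => by
      rw [hfd c x (hR4.trans hx), hfd c y (hR4.trans hy), ← map_sub,
        LinearIsometryEquiv.norm_map, sub_sub_sub_cancel_right]
      exact hLδ _ _ (hp x (hR4.trans hx)) (hp y (hR4.trans hy)) i j)
  refine ⟨R', by linarith, C₀, hC₀, fun x hx => ?_⟩
  rw [← hfn c x (hR4.trans (le_trans hR' hx))]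
  exact hfin x hx
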